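/- arXiv:2006.01288 — 9 statements merged into one kernel-verified Lean document; each statement's English description precedes it below -/
import Mathlib

section
/- Let F be a field, n ≥ 1, and A an invertible n×n matrix over F. If there exists an invertible n×n matrix B over F with Bᵀ = B and A·B·Aᵀ = B, then A is conjugate to its inverse: there exists an invertible n×n matrix P over F with P·A·P⁻¹ = A⁻¹. -/
/-!
An invertible `B` with `A * B * Aᵀ = B` conjugates `Aᵀ` to `A⁻¹`, so it is enough that every square
matrix is conjugate to its transpose. An invertible matrix `S` with `Aᵀ * S = S * A` is the Gram
matrix of a nondegenerate bilinear form on `K ^ n` for which `A` is self-adjoint, that is, for which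
all of `K[X]` acts by self-adjoint maps. Such a form exists on every finitely generated torsion
module over a principal ideal domain `R` containing `K`: by the structure theorem it suffices to
treat `R ⧸ (p ^ (e + 1))`. There every nonzero element has a multiple equal to `p ^ e`, so
`(x, y) ↦ φ (x * y)` is nondegenerate for any `K`-linear functional `φ` with `φ (p ^ e) ≠ 0`.
-/

open LinearMap (BilinForm)
open scoped DirectSum Matrix Polynomial

/-- The `R`-module `M` carries a left-separating `K`-bilinear form for which every scalar of `R`
acts as a self-adjoint map. For `R` a commutative algebra over a field `K` and `M`
finite-dimensional over `K`, this says that `M` is isomorphic as an `R`-module to its `K`-dual. -/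
def HasSelfAdjointForm (K R M : Type*) [CommSemiring K] [SMul R M] [AddCommMonoid M]
    [Module K M] : Prop :=
  ∃ B : BilinForm K M, B.SeparatingLeft ∧ ∀ r : R, B.IsSelfAdjoint (r • · : M → M)

namespace HasSelfAdjointForm

theorem of_linearEquiv {K R M N : Type*} [CommSemiring K] [Semiring R] [SMul K R]
    [AddCommMonoid M] [Module K M] [Module R M] [IsScalarTower K R M]
    [AddCommMonoid N] [Module K N] [Module R N] [IsScalarTower K R N]
    (e : M ≃ₗ[R] N) (hN : HasSelfAdjointForm K R N) : HasSelfAdjointForm K R M := by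
  obtain ⟨B, hB, hadj⟩ := hN
  let f : M →ₗ[K] N := e.toLinearMap.restrictScalars K
  refine ⟨B.compl₁₂ f f, fun x hx ↦ ?_, fun r x y ↦ ?_⟩
  · refine e.map_eq_zero_iff.mp (hB _ fun y ↦ ?_)
    simpa [f] using hx (e.symm y)
  · simpa [f] using hadj r (e x) (e y)

theorem directSum {K R ι : Type*} [CommSemiring K] [Semiring R] [Finite ι] {M : ι → Type*}
    [∀ i, AddCommMonoid (M i)] [∀ i, Module K (M i)] [∀ i, Module R (M i)]
    (h : ∀ i, HasSelfAdjointForm K R (M i)) : HasSelfAdjointForm K R (⨁ i, M i) := by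
  classical
  cases nonempty_fintype ι
  choose B hB hadj using h
  let S : BilinForm K (⨁ i, M i) :=
    ∑ i, (B i).compl₁₂ (DirectSum.component K ι M i) (DirectSum.component K ι M i)
  have S_apply (x y : ⨁ i, M i) : S x y = ∑ i, B i (x i) (y i) := by
    simp only [S, LinearMap.sum_apply, LinearMap.compl₁₂_apply, DirectSum.apply_eq_component K]
  refine ⟨S, fun x hx ↦ DFinsupp.ext fun i ↦ hB i _ fun y ↦ ?_, fun r x y ↦ ?_⟩
  · rw [← hx (DirectSum.of M i y), S_apply, Fintype.sum_eq_single i, DirectSum.of_eq_same]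
    intro j hj
    rw [DirectSum.of_eq_of_ne _ _ _ hj, map_zero]
  · simp only [S_apply, DirectSum.smul_apply]
    exact Finset.sum_congr rfl fun i _ ↦ hadj i r (x i) (y i)

theorem of_dual {K R A : Type*} [CommSemiring K] [CommSemiring R] [Semiring A] [Algebra K A]
    [Algebra R A] (φ : Module.Dual K A) (hφ : ∀ a, a ≠ 0 → ∃ b, φ (a * b) ≠ 0) :
    HasSelfAdjointForm K R A := by
  refine ⟨(LinearMap.mul K A).compr₂ φ, fun a ha ↦ ?_, fun r x y ↦ ?_⟩
  · by_contra hne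
    obtain ⟨b, hb⟩ := hφ a hne
    exact hb (ha b)
  · simp

end HasSelfAdjointForm

theorem exists_mul_eq_mk_pow {R : Type*} [CommRing R] [IsDomain R] [IsBezout R] {p : R}
    (hp : Prime p) {e : ℕ} {x : R ⧸ Ideal.span {p ^ (e + 1)}} (hx : x ≠ 0) :
    ∃ y, x * y = Ideal.Quotient.mk _ (p ^ e) := by
  obtain ⟨a, rfl⟩ := Ideal.Quotient.mk_surjective x
  rw [Ne, Ideal.Quotient.eq_zero_iff_dvd] at hx
  obtain ⟨b, c, hbc⟩ := IsBezout.gcd_eq_sum a (p ^ (e + 1))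
  obtain ⟨k, hk, hgk⟩ := (dvd_prime_pow hp (e + 1)).mp (IsBezout.gcd_dvd_right a (p ^ (e + 1)))
  have hke : k ≠ e + 1 := by
    rintro rfl
    exact hx (hgk.symm.dvd.trans (IsBezout.gcd_dvd_left _ _))
  obtain ⟨d, hd⟩ : IsBezout.gcd a (p ^ (e + 1)) ∣ p ^ e := hgk.dvd.trans (pow_dvd_pow p (by lia))
  refine ⟨Ideal.Quotient.mk _ (b * d), ?_⟩
  rw [← map_mul, Ideal.Quotient.mk_eq_mk_iff_sub_mem, Ideal.mem_span_singleton]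
  exact ⟨-(c * d), by rw [hd, ← hbc]; ring⟩

theorem hasSelfAdjointForm_quotient_span_pow (K : Type*) {R : Type*} [Field K] [CommRing R]
    [IsDomain R] [IsBezout R] [Algebra K R] {p : R} (hp : Prime p) (e : ℕ) :
    HasSelfAdjointForm K R (R ⧸ Ideal.span {p ^ e}) := by
  rcases e with _ | e
  · have : Subsingleton (R ⧸ Ideal.span {p ^ 0}) := by
      rw [pow_zero, Ideal.span_singleton_one]; infer_instance
    exact .of_dual 0 fun a ha ↦ absurd (Subsingleton.elim a 0) ha
  · have hpe : Ideal.Quotient.mk (Ideal.span {p ^ (e + 1)}) (p ^ e) ≠ 0 := by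
      rw [Ne, Ideal.Quotient.eq_zero_iff_dvd, pow_dvd_pow_iff hp.ne_zero hp.not_isUnit]
      lia
    obtain ⟨φ, hφ⟩ : ∃ φ : Module.Dual K _, φ (Ideal.Quotient.mk _ (p ^ e)) ≠ 0 := by
      by_contra! h
      exact hpe ((Module.forall_dual_apply_eq_zero_iff K _).mp h)
    refine .of_dual φ fun a ha ↦ ?_
    obtain ⟨b, hb⟩ := exists_mul_eq_mk_pow hp ha
    exact ⟨b, hb ▸ hφ⟩

theorem hasSelfAdjointForm_of_isTorsion (K : Type*) {R M : Type*} [Field K]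
    [CommRing R] [IsDomain R] [IsPrincipalIdealRing R] [Algebra K R] [AddCommGroup M] [Module K M]
    [Module R M] [IsScalarTower K R M] [Module.Finite R M] (hM : Module.IsTorsion R M) :
    HasSelfAdjointForm K R M := by
  obtain ⟨ι, _, p, hp, e, ⟨equiv⟩⟩ := Module.equiv_directSum_of_isTorsion hM
  exact .of_linearEquiv equiv <| .directSum fun i ↦
    hasSelfAdjointForm_quotient_span_pow K (hp i).prime (e i)

theorem isTorsion_aeval' {R M : Type*} [CommRing R] [AddCommGroup M] [Module R M]
    [Module.Finite R M] (f : Module.End R M) : Module.IsTorsion R[X] (Module.AEval' f) := by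
  intro x
  obtain ⟨q, hq, hqf⟩ := LinearMap.exists_monic_and_aeval_eq_zero R f
  refine ⟨⟨q, hq.mem_nonZeroDivisors⟩, (Module.AEval'.of f).symm.injective ?_⟩
  rw [Submonoid.mk_smul, Module.AEval.of_symm_smul, hqf, zero_smul, map_zero]

theorem exists_separatingLeft_isSelfAdjoint {K V : Type*} [Field K]
    [AddCommGroup V] [Module K V] [FiniteDimensional K V] (f : Module.End K V) :
    ∃ B : BilinForm K V, B.SeparatingLeft ∧ B.IsSelfAdjoint f := by
  let of := Module.AEval'.of f
  obtain ⟨B, hB, hadj⟩ := hasSelfAdjointForm_of_isTorsion K (isTorsion_aeval' f)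
  refine ⟨B.compl₁₂ of.toLinearMap of.toLinearMap, fun x hx ↦ ?_, fun x y ↦ ?_⟩
  · refine of.map_eq_zero_iff.mp (hB _ fun y ↦ ?_)
    simpa using hx (of.symm y)
  · simpa [of, Module.AEval'.X_smul_of] using hadj Polynomial.X (of x) (of y)

theorem isConj_transpose {K ι : Type*} [Field K] [Fintype ι] [DecidableEq ι] (A : Matrix ι ι K) :
    IsConj A Aᵀ := by
  obtain ⟨B, hB, hadj⟩ := exists_separatingLeft_isSelfAdjoint (Matrix.toLin' A)
  let S := LinearMap.toMatrix₂' K B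
  have hS : IsUnit S := by
    rw [Matrix.isUnit_iff_isUnit_det, isUnit_iff_ne_zero]
    exact Matrix.separatingLeft_iff_det_ne_zero.mp hB.toMatrix₂'
  have hAS : Aᵀ * S = S * A := by
    rw [← Matrix.toLinearMap₂'_toMatrix' (R := K) B] at hadj
    exact (isAdjointPair_toLinearMap₂' _ _ _ _).mp hadj
  exact ⟨hS.unit, hAS.symm⟩

theorem stmt0_general {F ι : Type*} [Field F] [Fintype ι] [DecidableEq ι] {A B : Matrix ι ι F}
    (hB : IsUnit B) (hAB : A * B * Aᵀ = B) : ∃ P : Matrix ι ι F, IsUnit P ∧ P * A * P⁻¹ = A⁻¹ := by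
  have hdetB : IsUnit B.det := (Matrix.isUnit_iff_isUnit_det B).mp hB
  have hinv : A * (B * Aᵀ * B⁻¹) = 1 := by
    rw [← Matrix.mul_assoc, ← Matrix.mul_assoc, hAB, Matrix.mul_nonsing_inv B hdetB]
  have hB_conj : SemiconjBy B Aᵀ A⁻¹ := by
    rw [SemiconjBy, Matrix.inv_eq_right_inv hinv, Matrix.nonsing_inv_mul_cancel_right _ _ hdetB]
  obtain ⟨S, hS⟩ := isConj_transpose A
  have hBS : IsUnit (B * S) := hB.mul S.isUnit
  refine ⟨B * S, hBS, ?_⟩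
  rw [(hB_conj.mul_left hS).eq,
    Matrix.mul_nonsing_inv_cancel_right _ _ ((Matrix.isUnit_iff_isUnit_det _).mp hBS)]

/-- An invertible matrix preserving some non-degenerate symmetric bilinear form is
conjugate to its inverse. -/
theorem stmt0 (F : Type*) [Field F] (n : ℕ) (hn : 1 ≤ n)
    (A : Matrix (Fin n) (Fin n) F) (hA : IsUnit A)
    (h : ∃ B : Matrix (Fin n) (Fin n) F,
      IsUnit B ∧ B.transpose = B ∧ A * B * A.transpose = B) :
    ∃ P : Matrix (Fin n) (Fin n) F, IsUnit P ∧ P * A * P⁻¹ = A⁻¹ := by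
  obtain ⟨B, hB, -, hAB⟩ := h
  exact stmt0_general hB hAB
end

section
/- Let q be an odd prime power, 𝔽_q the finite field with q elements, and m ≥ 1. The number of m×m matrices B over 𝔽_q with Bᵀ = B and B invertible equals q^{m(m+1)/2 − k²} · ∏_{j=1}^{k} (q^{2j−1} − 1), where k = ⌈m/2⌉. -/
/-!
Border a symmetric matrix by one row and column, so that it reads `[a, v; vᵀ, D]`. If `a ≠ 0`, it
is invertible exactly when the Schur complement `D - a⁻¹ vᵀ v` is, and `D ↦ D - a⁻¹ vᵀ v` permutes
the symmetric matrices. If `a = 0`, invertibility forces `v ≠ 0`; after moving a nonzero entry `c`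
of `v` to the front, the leading `2 × 2` block is `[0, c; c, d]`, which is invertible for every `d`,
and its Schur complement reduces the count by two dimensions. With `N m` the number of invertible
symmetric `m × m` matrices this gives
`N (m + 2) = (q - 1) q ^ (m + 1) N (m + 1) + (q ^ (m + 1) - 1) q ^ (m + 1) N m`,
in which `N (m + 1) / N m` is alternately `q ^ (m + 1) - 1` and `q ^ (m + 1)`.
-/

theorem sum_eq_add_card_sub_one_mul {α : Type*} [Fintype α] {f : α → ℕ} (a : α) {c : ℕ}
    (h : ∀ x ≠ a, f x = c) : ∑ x, f x = f a + (Nat.card α - 1) * c := by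
  classical
  rw [← Finset.add_sum_erase _ _ (Finset.mem_univ a),
    Finset.sum_eq_card_nsmul fun x hx => h x (Finset.ne_of_mem_erase hx),
    Finset.card_erase_of_mem (Finset.mem_univ a), Finset.card_univ, smul_eq_mul,
    Nat.card_eq_fintype_card]

theorem card_matrix (m n α : Type*) [Fintype m] [Fintype n] :
    Nat.card (Matrix m n α) = Nat.card α ^ (Fintype.card m * Fintype.card n) := by
  rw [Nat.card_congr (Matrix.of (m := m) (n := n) (α := α)).symm, Nat.card_fun, Nat.card_fun,
    Nat.card_eq_fintype_card (α := m), Nat.card_eq_fintype_card (α := n), ← pow_mul, mul_comm]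

section Recurrence

variable {q : ℕ} {a : ℕ → ℕ}

theorem eq_pow_mul_of_recurrence {m : ℕ} (hq : 0 < q)
    (hrec : a (m + 2) = (q - 1) * (q ^ (m + 1) * a (m + 1)) +
      (q ^ (m + 1) - 1) * (q ^ (m + 1) * a m))
    (h : a (m + 1) = (q ^ (m + 1) - 1) * a m) : a (m + 2) = q ^ (m + 2) * a (m + 1) := by
  calc
    a (m + 2) = (q - 1) * (q ^ (m + 1) * a (m + 1)) + q ^ (m + 1) * a (m + 1) := by
      rw [hrec, h]; ring
    _ = (q - 1 + 1) * (q ^ (m + 1) * a (m + 1)) := by ring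
    _ = q ^ (m + 2) * a (m + 1) := by rw [Nat.sub_add_cancel hq]; ring

theorem eq_pow_sub_one_mul_of_recurrence {m : ℕ} (hq : 0 < q)
    (hrec : a (m + 2) = (q - 1) * (q ^ (m + 1) * a (m + 1)) +
      (q ^ (m + 1) - 1) * (q ^ (m + 1) * a m))
    (h : a (m + 1) = q ^ (m + 1) * a m) : a (m + 2) = (q ^ (m + 2) - 1) * a (m + 1) := by
  have hpow : (q - 1) * q ^ (m + 1) + (q ^ (m + 1) - 1) = q ^ (m + 2) - 1 := by
    have h₁ : 0 < q ^ (m + 1) := pow_pos hq _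
    have h₂ : q ^ (m + 1) ≤ q * q ^ (m + 1) := Nat.le_mul_of_pos_left _ hq
    rw [Nat.sub_one_mul, pow_succ' q (m + 1)]
    omega
  rw [hrec, ← h, ← hpow]
  ring

theorem eq_prod_even_odd_of_recurrence (hq : 0 < q) (h₀ : a 0 = 1) (h₁ : a 1 = q - 1)
    (hrec : ∀ m, a (m + 2) = (q - 1) * (q ^ (m + 1) * a (m + 1)) +
      (q ^ (m + 1) - 1) * (q ^ (m + 1) * a m)) (k : ℕ) :
    a (2 * k) = q ^ (k * (k + 1)) * ∏ j ∈ Finset.range k, (q ^ (2 * j + 1) - 1) ∧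
      a (2 * k + 1) = q ^ (k * (k + 1)) * ∏ j ∈ Finset.range (k + 1), (q ^ (2 * j + 1) - 1) := by
  have hodd (k : ℕ) : a (2 * k + 1) = (q ^ (2 * k + 1) - 1) * a (2 * k) := by
    induction k with
    | zero => simp [h₀, h₁]
    | succ k ih =>
      exact eq_pow_sub_one_mul_of_recurrence hq (hrec _) (eq_pow_mul_of_recurrence hq (hrec _) ih)
  have heven (k : ℕ) :
      a (2 * k) = q ^ (k * (k + 1)) * ∏ j ∈ Finset.range k, (q ^ (2 * j + 1) - 1) := by
    induction k with
    | zero => simp [h₀]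
    | succ k ih =>
      rw [Nat.mul_succ, eq_pow_mul_of_recurrence hq (hrec _) (hodd k), hodd, ih,
        Finset.prod_range_succ]
      ring
  refine ⟨heven k, ?_⟩
  rw [hodd, heven, Finset.prod_range_succ]
  ring

theorem eq_prod_of_recurrence (hq : 0 < q) (h₀ : a 0 = 1) (h₁ : a 1 = q - 1)
    (hrec : ∀ m, a (m + 2) = (q - 1) * (q ^ (m + 1) * a (m + 1)) +
      (q ^ (m + 1) - 1) * (q ^ (m + 1) * a m)) (m : ℕ) :
    a m = q ^ (m * (m + 1) / 2 - ((m + 1) / 2) ^ 2) *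
      ∏ j ∈ Finset.range ((m + 1) / 2), (q ^ (2 * (j + 1) - 1) - 1) := by
  obtain ⟨k, rfl | rfl⟩ := m.even_or_odd'
  · have hexp : 2 * k * (2 * k + 1) / 2 - k ^ 2 = k * (k + 1) := by
      rw [mul_assoc, Nat.mul_div_cancel_left _ two_pos]
      exact Nat.sub_eq_of_eq_add (by ring)
    rw [show (2 * k + 1) / 2 = k by omega, hexp]
    exact (eq_prod_even_odd_of_recurrence hq h₀ h₁ hrec k).1
  · have hexp : (2 * k + 1) * (2 * k + 1 + 1) / 2 - (k + 1) ^ 2 = k * (k + 1) := by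
      rw [show (2 * k + 1) * (2 * k + 1 + 1) = 2 * ((2 * k + 1) * (k + 1)) by ring,
        Nat.mul_div_cancel_left _ two_pos]
      exact Nat.sub_eq_of_eq_add (by ring)
    rw [show (2 * k + 1 + 1) / 2 = k + 1 by omega, hexp]
    exact (eq_prod_even_odd_of_recurrence hq h₀ h₁ hrec k).2

end Recurrence

section Symmetric

open Matrix

theorem fromBlocks_submatrix_sumAssoc {l₁ l₂ l₃ o₁ o₂ o₃ α : Type*} (A : Matrix l₁ o₁ α)
    (B₁ : Matrix l₁ o₂ α) (B₂ : Matrix l₁ o₃ α) (C₁ : Matrix l₂ o₁ α) (C₂ : Matrix l₃ o₁ α)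
    (D₁₁ : Matrix l₂ o₂ α) (D₁₂ : Matrix l₂ o₃ α) (D₂₁ : Matrix l₃ o₂ α) (D₂₂ : Matrix l₃ o₃ α) :
    (fromBlocks A (fromCols B₁ B₂) (fromRows C₁ C₂) (fromBlocks D₁₁ D₁₂ D₂₁ D₂₂)).submatrix
        (Equiv.sumAssoc l₁ l₂ l₃) (Equiv.sumAssoc o₁ o₂ o₃) =
      fromBlocks (fromBlocks A B₁ C₁ D₁₁) (fromRows B₂ D₁₂) (fromCols C₂ D₂₁) D₂₂ := by
  ext ((i | i) | i) ((j | j) | j) <;> rfl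

theorem isSymm_of_subsingleton {m α : Type*} [Subsingleton m] (A : Matrix m m α) : A.IsSymm :=
  IsSymm.ext fun i j => by rw [Subsingleton.elim i j]

theorem transpose_toBlocks₁₂_of_isSymm {m n α : Type*} {M : Matrix (m ⊕ n) (m ⊕ n) α}
    (hM : M.IsSymm) : M.toBlocks₁₂ᵀ = M.toBlocks₂₁ :=
  ext fun _ _ => hM.apply _ _

/-- A symmetric matrix amounts to its upper blocks and its symmetric lower right block. The
predicate `P` lets the correspondence restrict to a class of symmetric matrices such as the
invertible ones. -/
def symmBlocksEquiv {m n α : Type*} (P : Matrix (m ⊕ n) (m ⊕ n) α → Prop) :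
    {M : Matrix (m ⊕ n) (m ⊕ n) α // M.IsSymm ∧ P M} ≃
      Σ x : {A : Matrix m m α // A.IsSymm} × Matrix m n α,
        {D : Matrix n n α // D.IsSymm ∧ P (fromBlocks x.1 x.2 x.2ᵀ D)} where
  toFun M := ⟨(⟨M.1.toBlocks₁₁, M.2.1.submatrix Sum.inl⟩, M.1.toBlocks₁₂), M.1.toBlocks₂₂,
    M.2.1.submatrix Sum.inr, by
      rw [transpose_toBlocks₁₂_of_isSymm M.2.1, fromBlocks_toBlocks]
      exact M.2.2⟩
  invFun x := ⟨fromBlocks x.1.1 x.1.2 x.1.2ᵀ x.2, x.1.1.2.fromBlocks rfl x.2.2.1, x.2.2.2⟩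
  left_inv M := Subtype.ext <| by
    simp only [transpose_toBlocks₁₂_of_isSymm M.2.1, fromBlocks_toBlocks]
  right_inv _ := rfl

variable {m n R F : Type*} [Fintype m] [DecidableEq m] [Fintype n] [DecidableEq n]

theorem isUnit_fromBlocks_zero₁₁ [CommRing R] {B C D : Matrix m m R} :
    IsUnit (fromBlocks 0 B C D) ↔ IsUnit B ∧ IsUnit C := by
  rw [← isUnit_submatrix_equiv (Equiv.refl _) (Equiv.sumComm m m), Equiv.coe_refl,
    Equiv.sumComm_apply, fromBlocks_submatrix_sum_swap_right, submatrix_id_id,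
    isUnit_fromBlocks_zero₁₂]

theorem isUnit_iff_ne_zero_of_unique [Field F] [Unique m] {A : Matrix m m F} :
    IsUnit A ↔ A ≠ 0 := by
  rw [isUnit_iff_isUnit_det, isUnit_iff_ne_zero, det_unique, Ne, Ne, ← Matrix.ext_iff]
  simp [Unique.forall_iff]

/-- The invertible symmetric matrices: the Gram matrices of the non-degenerate symmetric bilinear
forms on `n → R`. -/
def invertibleSymm (n R : Type*) [Fintype n] [DecidableEq n] [CommRing R] : Set (Matrix n n R) :=
  {B | B.IsSymm ∧ IsUnit B}

/-- The symmetric lower right blocks `D` that complete the upper blocks `A`, `B` to an invertible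
matrix `[A, B; Bᵀ, D]`; counting them for each `A`, `B` counts the invertible symmetric matrices.
Symmetry of `A` is not imposed. -/
def symmCompletions [CommRing R] (A : Matrix m m R) (B : Matrix m n R) : Set (Matrix n n R) :=
  {D | D.IsSymm ∧ IsUnit (fromBlocks A B Bᵀ D)}

section CommRing

variable [CommRing R]

theorem card_invertibleSymm_congr (e : m ≃ n) :
    Nat.card (invertibleSymm m R) = Nat.card (invertibleSymm n R) :=
  Nat.card_congr <| (reindex e e).subtypeEquiv fun _ =>
    and_congr (isSymm_reindex_iff e).symm (isUnit_submatrix_equiv _ _).symm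

theorem card_invertibleSymm_of_isEmpty [IsEmpty n] : Nat.card (invertibleSymm n R) = 1 :=
  Nat.card_eq_one_iff_unique.2 ⟨inferInstance, ⟨⟨1, isSymm_one, isUnit_one⟩⟩⟩

theorem card_invertibleSymm_sum_eq_sum [Fintype R] [Subsingleton m] :
    Nat.card (invertibleSymm (m ⊕ n) R) =
      ∑ A : Matrix m m R, ∑ B : Matrix m n R, Nat.card (symmCompletions A B) := by
  classical
  rw [← (Equiv.subtypeUnivEquiv (p := IsSymm (α := R) (n := m)) isSymm_of_subsingleton).sum_comp,
    ← Fintype.sum_prod_type', ← Nat.card_sigma]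
  exact Nat.card_congr (symmBlocksEquiv IsUnit)

/-- Passing to the Schur complement of an invertible upper left block: the completions of `A` and
`B` are the translates of the invertible symmetric matrices by `Bᵀ * A⁻¹ * B`. -/
noncomputable def symmCompletionsEquiv {A : Matrix m m R} (hA : A.IsSymm) (hA_unit : IsUnit A)
    (B : Matrix m n R) : symmCompletions A B ≃ invertibleSymm n R :=
  letI := hA_unit.invertible
  (Equiv.subRight (Bᵀ * ⅟A * B)).subtypeEquiv fun D => by
    have hS : (Bᵀ * ⅟A * B).IsSymm := by
      rw [IsSymm, transpose_mul, transpose_mul, transpose_transpose, invOf_eq_nonsing_inv,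
        transpose_nonsing_inv, hA.eq, Matrix.mul_assoc]
    refine and_congr ⟨fun hD => hD.sub hS, fun hD => ?_⟩ isUnit_fromBlocks_iff_of_invertible₁₁
    simpa using hD.add hS

theorem card_symmCompletions_zero_fromCols {C : Matrix m m R} (hC : IsUnit C)
    (U : Matrix m n R) :
    Nat.card (symmCompletions 0 (fromCols C U)) =
      Nat.card {A : Matrix m m R // A.IsSymm} * Nat.card (Matrix m n R) *
        Nat.card (invertibleSymm n R) := by
  have hunit (A : Matrix m m R) : IsUnit (fromBlocks 0 C Cᵀ A) :=
    isUnit_fromBlocks_zero₁₁.2 ⟨hC, (isUnit_transpose C).2 hC⟩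
  have hassoc (A : Matrix m m R) (W : Matrix m n R) (D : Matrix n n R) :
      IsUnit (fromBlocks 0 (fromCols C U) (fromCols C U)ᵀ (fromBlocks A W Wᵀ D)) ↔
        IsUnit (fromBlocks (fromBlocks 0 C Cᵀ A) (fromRows U W) (fromRows U W)ᵀ D) := by
    rw [transpose_fromCols, transpose_fromRows, ← fromBlocks_submatrix_sumAssoc,
      isUnit_submatrix_equiv]
  rw [← Nat.card_prod, ← Nat.card_prod]
  exact Nat.card_congr <| (symmBlocksEquiv _).trans <|
    (Equiv.sigmaCongrRight fun x =>
      (Equiv.subtypeEquivRight fun D => and_congr_right fun _ => hassoc x.1 x.2 D).trans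
        (symmCompletionsEquiv (isSymm_zero.fromBlocks rfl x.1.2) (hunit x.1) _)).trans <|
    Equiv.sigmaEquivProd _ _

theorem card_symmCompletions_submatrix {l : Type*} [Fintype l] [DecidableEq l] (A : Matrix m m R)
    (B : Matrix m n R) (e : l ≃ n) :
    Nat.card (symmCompletions A (B.submatrix id e)) = Nat.card (symmCompletions A B) := by
  refine Nat.card_congr ((reindex e e).subtypeEquiv fun D =>
    and_congr (isSymm_reindex_iff e).symm ?_)
  have h : (fromBlocks A B Bᵀ (reindex e e D)).submatrix ((Equiv.refl m).sumCongr e)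
      ((Equiv.refl m).sumCongr e) = fromBlocks A (B.submatrix id e) (B.submatrix id e)ᵀ D := by
    ext (i | i) (j | j) <;> simp
  rw [← h, isUnit_submatrix_equiv]

theorem symmCompletions_zero_zero [Nonempty m] [Nontrivial R] :
    symmCompletions (0 : Matrix m m R) (0 : Matrix m n R) = ∅ := by
  refine Set.eq_empty_of_forall_notMem fun D hD => ?_
  obtain ⟨i⟩ := ‹Nonempty m›
  have hdet := det_eq_zero_of_row_eq_zero (A := fromBlocks 0 0 0ᵀ D) (Sum.inl i)
    (by rintro (j | j) <;> rfl)
  exact ((isUnit_iff_isUnit_det _).1 hD.2).ne_zero hdet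

end CommRing

section Field

variable [Field F]

theorem card_symmCompletions_zero_of_ne_zero {B : Matrix Unit (Unit ⊕ n) F} (hB : B ≠ 0) :
    Nat.card (symmCompletions 0 B) =
      Nat.card F ^ (Fintype.card n + 1) * Nat.card (invertibleSymm n F) := by
  obtain ⟨j, hj⟩ : ∃ j, B () j ≠ 0 := by
    by_contra! h
    exact hB (ext fun _ => h)
  let e := Equiv.swap (Sum.inl ()) j
  have hC : IsUnit (B.submatrix id e).toCols₁ := isUnit_iff_ne_zero_of_unique.2 fun h => hj <| by
    simpa [e] using congr_fun₂ h () ()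
  rw [← card_symmCompletions_submatrix 0 B e, ← fromCols_toCols (B.submatrix id e),
    card_symmCompletions_zero_fromCols hC,
    Nat.card_congr (Equiv.subtypeUnivEquiv isSymm_of_subsingleton), card_matrix, card_matrix,
    ← pow_add, Fintype.card_unit, one_mul, one_mul, add_comm]

variable [Finite F]

theorem card_invertibleSymm_unit_sum_unit_sum :
    Nat.card (invertibleSymm (Unit ⊕ (Unit ⊕ n)) F) =
      (Nat.card F - 1) *
          (Nat.card F ^ (Fintype.card n + 1) * Nat.card (invertibleSymm (Unit ⊕ n) F)) +
        (Nat.card F ^ (Fintype.card n + 1) - 1) *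
          (Nat.card F ^ (Fintype.card n + 1) * Nat.card (invertibleSymm n F)) := by
  classical
  cases nonempty_fintype F
  have hrow : Nat.card (Matrix Unit (Unit ⊕ n) F) = Nat.card F ^ (Fintype.card n + 1) := by
    rw [card_matrix, Fintype.card_sum, Fintype.card_unit, one_mul, add_comm]
  have hne (A : Matrix Unit Unit F) (hA : A ≠ 0) :
      ∑ B : Matrix Unit (Unit ⊕ n) F, Nat.card (symmCompletions A B) =
        Nat.card F ^ (Fintype.card n + 1) * Nat.card (invertibleSymm (Unit ⊕ n) F) := by
    simp_rw [Nat.card_congr (symmCompletionsEquiv (isSymm_of_subsingleton A)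
      (isUnit_iff_ne_zero_of_unique.2 hA) _)]
    rw [Finset.sum_const, Finset.card_univ, ← Nat.card_eq_fintype_card, hrow, smul_eq_mul]
  have hzero : ∑ B : Matrix Unit (Unit ⊕ n) F, Nat.card (symmCompletions 0 B) =
      (Nat.card F ^ (Fintype.card n + 1) - 1) *
        (Nat.card F ^ (Fintype.card n + 1) * Nat.card (invertibleSymm n F)) := by
    rw [sum_eq_add_card_sub_one_mul 0 fun _ => card_symmCompletions_zero_of_ne_zero,
      symmCompletions_zero_zero, Nat.card_of_isEmpty, zero_add, hrow]
  rw [card_invertibleSymm_sum_eq_sum, sum_eq_add_card_sub_one_mul 0 hne, hzero, card_matrix,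
    Fintype.card_unit, mul_one, pow_one, add_comm]

theorem card_invertibleSymm_of_unique [Unique n] :
    Nat.card (invertibleSymm n F) = Nat.card F - 1 := by
  have h : invertibleSymm n F = {0}ᶜ := by
    ext A
    exact (and_iff_right (isSymm_of_subsingleton A)).trans isUnit_iff_ne_zero_of_unique
  rw [h, Nat.card_coe_set_eq, Set.ncard_compl, Set.ncard_singleton, card_matrix,
    Fintype.card_unique, one_mul, pow_one]

theorem card_invertibleSymm_fin_add_two (m : ℕ) :
    Nat.card (invertibleSymm (Fin (m + 2)) F) =
      (Nat.card F - 1) * (Nat.card F ^ (m + 1) * Nat.card (invertibleSymm (Fin (m + 1)) F)) +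
        (Nat.card F ^ (m + 1) - 1) *
          (Nat.card F ^ (m + 1) * Nat.card (invertibleSymm (Fin m) F)) := by
  have e₁ : Fin (m + 1) ≃ Unit ⊕ Fin m := Fintype.equivOfCardEq (by simp [add_comm])
  have e₂ : Fin (m + 2) ≃ Unit ⊕ (Unit ⊕ Fin m) := Fintype.equivOfCardEq (by simp; omega)
  rw [card_invertibleSymm_congr e₁, card_invertibleSymm_congr e₂,
    card_invertibleSymm_unit_sum_unit_sum, Fintype.card_fin]

end Field

end Symmetric

theorem stmt1_general (F n : Type*) [Field F] [Finite F] [Fintype n] [DecidableEq n] :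
    Nat.card {B : Matrix n n F // B.transpose = B ∧ IsUnit B} =
      Nat.card F ^
          (Fintype.card n * (Fintype.card n + 1) / 2 - ((Fintype.card n + 1) / 2) ^ 2) *
        ∏ j ∈ Finset.range ((Fintype.card n + 1) / 2), (Nat.card F ^ (2 * (j + 1) - 1) - 1) := by
  change Nat.card (invertibleSymm n F) = _
  rw [card_invertibleSymm_congr (Fintype.equivFin n)]
  exact eq_prod_of_recurrence (a := fun m => Nat.card (invertibleSymm (Fin m) F)) Nat.card_pos
    card_invertibleSymm_of_isEmpty card_invertibleSymm_of_unique card_invertibleSymm_fin_add_two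
    (Fintype.card n)

/-- The number of invertible symmetric `m × m` matrices over a finite field of odd
prime-power order `q` equals `q^(m(m+1)/2 - k²) · ∏_{j=1}^{k} (q^(2j-1) - 1)` with
`k = ⌈m/2⌉`. -/
theorem stmt1 (q m : ℕ) (hq : ∃ p k, Nat.Prime p ∧ 0 < k ∧ q = p ^ k) (hodd : Odd q)
    (F : Type*) [Field F] [Fintype F] (hF : Fintype.card F = q) (hm : 1 ≤ m) :
    Nat.card {B : Matrix (Fin m) (Fin m) F // B.transpose = B ∧ IsUnit B} =
      q ^ (m * (m + 1) / 2 - ((m + 1) / 2) ^ 2) *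
        ∏ j ∈ Finset.range ((m + 1) / 2), (q ^ (2 * (j + 1) - 1) - 1) := by
  subst hF
  simpa only [Nat.card_eq_fintype_card, Fintype.card_fin] using stmt1_general F (Fin m)
end

section
/- Let q be an odd prime power, 𝔽_q the finite field with q elements, and m ≥ 1. The number of invertible m×m matrices B over 𝔽_q with Bᵀ = −B equals 0 if m is odd, and equals q^{m(m−2)/4} · ∏_{j=1}^{m/2} (q^{2j−1} − 1) if m is even. -/
/-!
Counting alternating matrices rather than skew-symmetric ones makes the argument independent of the
characteristic; the two notions agree when `2 ≠ 0`. Sort the invertible alternating matrices of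
size `n + 2` by their first row `(0, v)`. None has `v = 0`, and congruence by `diag(1, P)` shows
that every `v ≠ 0` contributes equally many. For `v = (1, 0)` the top left `2 × 2` block is
invertible, and its Schur complement is the remaining `n × n` block whatever the second row is.
Hence `N (n + 2) = (q ^ (n + 1) - 1) * q ^ n * N n`, starting from `N 0 = 1` and `N 1 = 0`.
-/

section Skew

open Matrix

section Alternating

variable {m n R : Type*} [Fintype m] [DecidableEq m] [Fintype n] [DecidableEq n] [CommRing R]

theorem isAlt_toBilin'_iff {B : Matrix n n R} :
    (toBilin' B).IsAlt ↔ Bᵀ = -B ∧ B.diag = 0 := by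
  constructor
  · intro hB
    constructor
    · ext i j
      simpa only [toBilin'_single, transpose_apply, Matrix.neg_apply] using
        (hB.neg_eq (Pi.single i 1) (Pi.single j 1)).symm
    · ext i
      simpa only [toBilin'_single, diag_apply, Pi.zero_apply] using hB (Pi.single i 1)
  · rintro ⟨hskew, hdiag⟩ x
    have hswap (i j : n) : B i j = -B j i := congrFun₂ hskew j i
    rw [toBilin'_apply, ← Fintype.sum_prod_type']
    refine Finset.sum_involution (fun p _ ↦ p.swap) ?_ ?_ (by simp) (by simp)
    · rintro ⟨i, j⟩ -
      simp only [Prod.swap, hswap i j]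
      ring
    · rintro ⟨i, j⟩ - hne hfix
      obtain rfl : j = i := congrArg Prod.fst hfix
      exact hne (by simp [show B j j = 0 from congrFun hdiag j])

theorem isAlt_toBilin'_iff_transpose_eq_neg [NoZeroDivisors R] (h2 : (2 : R) ≠ 0)
    {B : Matrix n n R} : (toBilin' B).IsAlt ↔ Bᵀ = -B := by
  refine isAlt_toBilin'_iff.trans (and_iff_left_of_imp fun hskew ↦ ?_)
  ext i
  have h : B i i = -B i i := congrFun₂ hskew i i
  exact (mul_eq_zero.1 (by linear_combination h : 2 * B i i = 0)).resolve_left h2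

theorem isAlt_toBilin'_mul_mul_transpose {B : Matrix n n R} (hB : (toBilin' B).IsAlt)
    (P : Matrix m n R) : (toBilin' (P * B * Pᵀ)).IsAlt := by
  have hcomp := toBilin'_comp B Pᵀ Pᵀ
  rw [transpose_transpose] at hcomp
  exact hcomp ▸ fun x ↦ hB (toLin' Pᵀ x)

theorem isAlt_toBilin'_reindex_iff (e : m ≃ n) {B : Matrix m m R} :
    (toBilin' (reindex e e B)).IsAlt ↔ (toBilin' B).IsAlt := by
  have hneg : -reindex e e B = reindex e e (-B) := rfl
  have hdiag : (reindex e e B).diag = 0 ↔ B.diag = 0 := by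
    simp [funext_iff, e.symm.surjective.forall]
  rw [isAlt_toBilin'_iff, isAlt_toBilin'_iff, transpose_reindex, hneg,
    (reindex e e).injective.eq_iff, hdiag]

end Alternating

section Bordered

variable {n R : Type*}

/-- The matrix obtained from `C` by adding a new first row `(0, v)` and a new first column
`(0, -v)`; the new index is `Sum.inl ()`. -/
def bordered [NegZeroClass R] (v : n → R) (C : Matrix n n R) : Matrix (Unit ⊕ n) (Unit ⊕ n) R :=
  fromBlocks 0 (replicateRow Unit v) (-replicateCol Unit v) C

variable [CommRing R] [Fintype n]

theorem fromBlocks_one_mul_bordered_mul_transpose (P : Matrix n n R) (v : n → R)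
    (C : Matrix n n R) :
    fromBlocks 1 0 0 P * bordered v C * (fromBlocks 1 0 0 P)ᵀ =
      bordered (P *ᵥ v) (P * C * Pᵀ) := by
  simp [bordered, fromBlocks_transpose, fromBlocks_multiply, replicateCol_mulVec,
    ← transpose_replicateCol, transpose_mul]

variable [DecidableEq n]

theorem isAlt_toBilin'_bordered_iff {v : n → R} {C : Matrix n n R} :
    (toBilin' (bordered v C)).IsAlt ↔ (toBilin' C).IsAlt := by
  simp [isAlt_toBilin'_iff, bordered, fromBlocks_transpose, fromBlocks_neg, fromBlocks_inj,
    funext_iff]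

theorem bordered_toBlocks₂₂ {B : Matrix (Unit ⊕ n) (Unit ⊕ n) R} (hB : (toBilin' B).IsAlt) :
    bordered (fun j ↦ B (.inl ()) (.inr j)) B.toBlocks₂₂ = B := by
  obtain ⟨hskew, hdiag⟩ := isAlt_toBilin'_iff.1 hB
  ext (i | i) (_ | _)
  · exact (congrFun hdiag (.inl ())).symm
  · rfl
  · exact (congrFun₂ hskew (.inl ()) (.inr i)).symm
  · rfl

theorem isUnit_bordered_mulVec {P : Matrix n n R} (hP : IsUnit P) {v : n → R} {C : Matrix n n R}
    (hC : IsUnit (bordered v C)) : IsUnit (bordered (P *ᵥ v) (P * C * Pᵀ)) := by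
  have hQ : IsUnit (fromBlocks 1 0 0 P : Matrix (Unit ⊕ n) (Unit ⊕ n) R) := by
    rw [isUnit_iff_isUnit_det] at hP ⊢
    simpa using hP
  rw [← fromBlocks_one_mul_bordered_mul_transpose]
  exact (hQ.mul hC).mul ((isUnit_transpose _).2 hQ)

theorem not_isUnit_bordered_zero [Nontrivial R] (C : Matrix n n R) :
    ¬IsUnit (bordered 0 C) := by
  rw [isUnit_iff_isUnit_det, det_eq_zero_of_row_eq_zero (Sum.inl ())]
  · exact not_isUnit_zero
  · rintro (j | j) <;> rfl

theorem isUnit_bordered_bordered_iff (w : n → R) (D : Matrix n n R) :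
    IsUnit (bordered (Sum.elim 1 0) (bordered w D)) ↔ IsUnit D := by
  let J : Matrix (Unit ⊕ Unit) (Unit ⊕ Unit) R := fromBlocks 0 1 (-1) 0
  let X : Matrix (Unit ⊕ Unit) n R := fromRows 0 (replicateRow Unit w)
  let _ : Invertible J := ⟨-J, by simp [J, fromBlocks_neg, fromBlocks_multiply],
    by simp [J, fromBlocks_neg, fromBlocks_multiply]⟩
  have hblocks : (bordered (Sum.elim 1 0) (bordered w D)).submatrix
      (Equiv.sumAssoc Unit Unit n) (Equiv.sumAssoc Unit Unit n) = fromBlocks J X (-Xᵀ) D := by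
    ext ((i | i) | i) ((j | j) | j) <;> simp [bordered, J, X]
  have hschur : -Xᵀ * ⅟J * X = 0 := by
    change -Xᵀ * -J * X = 0
    simp [J, X, transpose_fromRows, fromCols_mul_fromBlocks, fromCols_mul_fromRows]
  rw [← isUnit_submatrix_equiv (Equiv.sumAssoc Unit Unit n) (Equiv.sumAssoc Unit Unit n),
    hblocks, isUnit_fromBlocks_iff_of_invertible₁₁, hschur, sub_zero]

/-- Deleting the first row and column: an alternating matrix is the same thing as a border together
with a smaller alternating matrix. The predicate `p` lets this be applied to matrices subject to a
further condition. -/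
def isAltSumEquivSigma (p : Matrix (Unit ⊕ n) (Unit ⊕ n) R → Prop) :
    {B : Matrix (Unit ⊕ n) (Unit ⊕ n) R // (toBilin' B).IsAlt ∧ p B} ≃
      Σ v : n → R, {C : Matrix n n R // (toBilin' C).IsAlt ∧ p (bordered v C)} where
  toFun B := ⟨fun j ↦ B.1 (.inl ()) (.inr j), B.1.toBlocks₂₂,
    isAlt_toBilin'_bordered_iff.1 ((bordered_toBlocks₂₂ B.2.1).symm ▸ B.2.1),
    (bordered_toBlocks₂₂ B.2.1).symm ▸ B.2.2⟩
  invFun x := ⟨bordered x.1 x.2.1, isAlt_toBilin'_bordered_iff.2 x.2.2.1, x.2.2.2⟩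
  left_inv B := Subtype.ext (bordered_toBlocks₂₂ B.2.1)
  right_inv _ := rfl

end Bordered

theorem exists_isUnit_mulVec_eq {n K : Type*} [Fintype n] [DecidableEq n] [Field K] {v w : n → K}
    (hv : v ≠ 0) (hw : w ≠ 0) : ∃ P : Matrix n n K, IsUnit P ∧ P *ᵥ v = w := by
  let f := (LinearEquiv.toSpanNonzeroSingleton K _ v hv).symm ≪≫ₗ
    LinearEquiv.toSpanNonzeroSingleton K _ w hw
  obtain ⟨g, hg⟩ := Submodule.exists_linearEquiv_restrict_eq f
  have hgv : g v = w := by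
    have h := hg (LinearEquiv.toSpanNonzeroSingleton K _ v hv 1)
    simp only [f, LinearEquiv.trans_apply, LinearEquiv.symm_apply_apply] at h
    simpa only [LinearEquiv.toSpanNonzeroSingleton_apply, one_smul] using h.symm
  refine ⟨g.toLinearMap.toMatrix', ?_, by rw [LinearMap.toMatrix'_mulVec]; exact hgv⟩
  exact LinearMap.isUnit_toMatrix'_iff.2 ((Module.End.isUnit_iff _).2 g.bijective)

section Count

variable {n F : Type*} [Fintype n] [DecidableEq n] [Field F]

variable (n F) in
/-- Invertible alternating `n × n` matrices over `F`, i.e. Gram matrices of nondegenerate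
alternating bilinear forms on `n → F`. -/
abbrev InvertibleAltMatrix : Type _ :=
  {B : Matrix n n F // (toBilin' B).IsAlt ∧ IsUnit B}

theorem card_invertibleAltMatrix_congr {m : Type*} [Fintype m] [DecidableEq m] (e : m ≃ n) :
    Nat.card (InvertibleAltMatrix m F) = Nat.card (InvertibleAltMatrix n F) :=
  Nat.card_congr <| (reindex e e).subtypeEquiv fun _ ↦
    and_congr (isAlt_toBilin'_reindex_iff e).symm (isUnit_submatrix_equiv e.symm e.symm).symm

theorem card_isUnit_bordered_le [Finite F] {v w : n → F} (hv : v ≠ 0) (hw : w ≠ 0) :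
    Nat.card {C : Matrix n n F // (toBilin' C).IsAlt ∧ IsUnit (bordered v C)} ≤
      Nat.card {C : Matrix n n F // (toBilin' C).IsAlt ∧ IsUnit (bordered w C)} := by
  obtain ⟨P, hP, rfl⟩ := exists_isUnit_mulVec_eq hv hw
  refine Nat.card_le_card_of_injective (fun C ↦ ⟨P * C.1 * Pᵀ,
    isAlt_toBilin'_mul_mul_transpose C.2.1 P, isUnit_bordered_mulVec hP C.2.2⟩) fun C D h ↦ ?_
  have h' : P * C.1 * Pᵀ = P * D.1 * Pᵀ := congrArg Subtype.val h
  exact Subtype.ext (hP.mul_left_cancel (((isUnit_transpose P).2 hP).mul_right_cancel h'))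

variable [Fintype F]

theorem card_isUnit_bordered_sumElim :
    Nat.card {C : Matrix (Unit ⊕ n) (Unit ⊕ n) F //
        (toBilin' C).IsAlt ∧ IsUnit (bordered (Sum.elim 1 0) C)} =
      Fintype.card F ^ Fintype.card n * Nat.card (InvertibleAltMatrix n F) := by
  classical
  rw [Nat.card_congr (isAltSumEquivSigma _), Nat.card_sigma]
  simp [isUnit_bordered_bordered_iff]

theorem card_invertibleAltMatrix_sum_sum :
    Nat.card (InvertibleAltMatrix (Unit ⊕ (Unit ⊕ n)) F) =
      (Fintype.card F ^ (Fintype.card n + 1) - 1) *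
        (Fintype.card F ^ Fintype.card n * Nat.card (InvertibleAltMatrix n F)) := by
  classical
  have he : (Sum.elim 1 0 : Unit ⊕ n → F) ≠ 0 := fun h ↦ one_ne_zero (congrFun h (.inl ()))
  have hfiber (v : Unit ⊕ n → F) (hv : v ∈ Finset.univ.erase 0) :
      Nat.card {C : Matrix (Unit ⊕ n) (Unit ⊕ n) F //
          (toBilin' C).IsAlt ∧ IsUnit (bordered v C)} =
        Fintype.card F ^ Fintype.card n * Nat.card (InvertibleAltMatrix n F) := by
    have hv' : v ≠ 0 := Finset.ne_of_mem_erase hv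
    rw [← card_isUnit_bordered_sumElim]
    exact (card_isUnit_bordered_le hv' he).antisymm (card_isUnit_bordered_le he hv')
  rw [Nat.card_congr (isAltSumEquivSigma _), Nat.card_sigma,
    ← Finset.add_sum_erase _ _ (Finset.mem_univ 0), Finset.sum_congr rfl hfiber]
  simp [not_isUnit_bordered_zero, Finset.card_erase_of_mem, add_comm]

variable (F) in
theorem card_invertibleAltMatrix_fin_add_two (m : ℕ) :
    Nat.card (InvertibleAltMatrix (Fin (m + 2)) F) =
      (Fintype.card F ^ (m + 1) - 1) *
        (Fintype.card F ^ m * Nat.card (InvertibleAltMatrix (Fin m) F)) := by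
  have e : Fin (m + 2) ≃ Unit ⊕ (Unit ⊕ Fin m) := Fintype.equivOfCardEq (by simp; ring)
  rw [card_invertibleAltMatrix_congr e, card_invertibleAltMatrix_sum_sum, Fintype.card_fin]

end Count

theorem card_invertibleAltMatrix_fin_odd (F : Type*) [Field F] [Finite F] (k : ℕ) :
    Nat.card (InvertibleAltMatrix (Fin (2 * k + 1)) F) = 0 := by
  have := Fintype.ofFinite F
  induction k with
  | zero =>
    have : IsEmpty (InvertibleAltMatrix (Fin 1) F) := by
      refine ⟨fun B ↦ not_isUnit_zero (?_ : IsUnit (0 : F))⟩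
      have hdet := (isUnit_iff_isUnit_det _).1 B.2.2
      rwa [det_fin_one, show B.1 0 0 = 0 from congrFun (isAlt_toBilin'_iff.1 B.2.1).2 0] at hdet
    exact Nat.card_of_isEmpty
  | succ k ih =>
    rw [show 2 * (k + 1) + 1 = 2 * k + 1 + 2 by ring, card_invertibleAltMatrix_fin_add_two, ih,
      mul_zero, mul_zero]

theorem card_invertibleAltMatrix_fin_even (F : Type*) [Field F] [Fintype F] (k : ℕ) :
    Nat.card (InvertibleAltMatrix (Fin (2 * k)) F) =
      Fintype.card F ^ (k * (k - 1)) *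
        ∏ j ∈ Finset.range k, (Fintype.card F ^ (2 * j + 1) - 1) := by
  induction k with
  | zero =>
    have : Nonempty (InvertibleAltMatrix (Fin 0) F) :=
      ⟨0, fun x ↦ by simp, isUnit_of_subsingleton 0⟩
    simp
  | succ k ih =>
    have hexp : (k + 1) * (k + 1 - 1) = 2 * k + k * (k - 1) := by
      cases k with
      | zero => rfl
      | succ k => simp only [Nat.add_sub_cancel]; ring
    rw [mul_add_one, card_invertibleAltMatrix_fin_add_two, ih, Finset.prod_range_succ, hexp,
      pow_add _ (2 * k)]
    ring

theorem stmt2_general (F : Type*) [Field F] [Fintype F] (m : ℕ) :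
    (Odd m → Nat.card {B : Matrix (Fin m) (Fin m) F // (toBilin' B).IsAlt ∧ IsUnit B} = 0) ∧
    (Even m → Nat.card {B : Matrix (Fin m) (Fin m) F // (toBilin' B).IsAlt ∧ IsUnit B} =
      Fintype.card F ^ (m * (m - 2) / 4) *
        ∏ j ∈ Finset.range (m / 2), (Fintype.card F ^ (2 * (j + 1) - 1) - 1)) := by
  constructor
  · rintro ⟨k, rfl⟩
    exact card_invertibleAltMatrix_fin_odd F k
  · intro hm
    obtain ⟨k, rfl⟩ := hm.two_dvd
    have hexp : 2 * k * (2 * k - 2) / 4 = k * (k - 1) := by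
      rw [show 2 * k - 2 = 2 * (k - 1) by lia, mul_mul_mul_comm]
      exact Nat.mul_div_cancel_left _ (by norm_num)
    rw [hexp, Nat.mul_div_cancel_left k two_pos]
    exact card_invertibleAltMatrix_fin_even F k

theorem two_ne_zero_of_odd_card {F : Type*} [Field F] [Fintype F] (h : Odd (Fintype.card F)) :
    (2 : F) ≠ 0 :=
  Ring.two_ne_zero fun hchar ↦
    Nat.not_even_iff_odd.2 h (Nat.even_iff.2 (FiniteField.even_card_of_char_two hchar))

end Skew

/-- The number of invertible skew-symmetric `m × m` matrices over a finite field of odd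
prime-power order `q` is `0` for odd `m` and `q^(m(m-2)/4) · ∏_{j=1}^{m/2} (q^(2j-1) - 1)`
for even `m`. -/
theorem stmt2 (q m : ℕ) (hq : ∃ p k, Nat.Prime p ∧ 0 < k ∧ q = p ^ k) (hodd : Odd q)
    (F : Type*) [Field F] [Fintype F] (hF : Fintype.card F = q) (hm : 1 ≤ m) :
    (Odd m → Nat.card {B : Matrix (Fin m) (Fin m) F // B.transpose = -B ∧ IsUnit B} = 0) ∧
    (Even m → Nat.card {B : Matrix (Fin m) (Fin m) F // B.transpose = -B ∧ IsUnit B} =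
      q ^ (m * (m - 2) / 4) * ∏ j ∈ Finset.range (m / 2), (q ^ (2 * (j + 1) - 1) - 1)) := by
  subst hF
  simpa only [isAlt_toBilin'_iff_transpose_eq_neg (two_ne_zero_of_odd_card hodd)] using
    stmt2_general F m
end

section
/- Let q be an odd prime power, 𝔽_q the finite field with q elements, ε ∈ {1, −1} ⊆ 𝔽_q, and i, m ≥ 1. Let J be the i×i Jordan block with eigenvalue ε (diagonal entries ε, entries 1 on the superdiagonal, 0 elsewhere), and let A be the block-diagonal (im)×(im) matrix consisting of m diagonal copies of J. Then F(A) equals: q^{(im²+m)/2 − k²}·∏_{j=1}^{k}(q^{2j−1}−1) with k = ⌈m/2⌉, if i is odd; q^{im²/2 − m²/4}·∏_{j=1}^{m/2}(q^{2j−1}−1), if i is even and m is even; and 0, if i is even and m is odd. -/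
/-!
Write `A = (ε + N) ⊗ 1` with `N` the nilpotent Jordan block. The Cayley transform linearises
`A * B * Aᵀ = B` to the condition that a nilpotent matrix, conjugate to `N ⊗ 1`, is skew for `B`.
The solutions of `(N ⊗ 1) * B + B * (N ⊗ 1)ᵀ = 0` are the matrices whose `m × m` blocks are
`(-1) ^ a • C (a + b)` for `0 ≤ a, b < i`, with `C s = 0` for `s ≥ i`. Such a `B` is symmetric iff
each `C s` is symmetric for even `s` and skew-symmetric for odd `s`, and it is invertible iff the
antidiagonal block `C (i - 1)` is. So `F(A)` is a power of `q` times the number of invertible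
symmetric (`i` odd) or skew-symmetric (`i` even) `m × m` matrices, and that number obeys a
recursion in `m`, obtained by splitting off a pivot block of size `1` or `2`.
-/

open Matrix
open scoped Kronecker

section Forms

variable {n R : Type*} [Fintype n] [DecidableEq n] [CommRing R]

/-- The number `F(A)` of nondegenerate symmetric matrices `B` with `A * B * Aᵀ = B`. -/
noncomputable def numInvariantForms (A : Matrix n n R) : ℕ :=
  Nat.card {B : Matrix n n R // Bᵀ = B ∧ IsUnit B ∧ A * B * Aᵀ = B}

/-- The number of nondegenerate symmetric matrices `B` for which `K` is skew, i.e.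
`K * B + B * Kᵀ = 0`. This is the Lie algebra analogue of `numInvariantForms`. -/
noncomputable def numSkewForms (K : Matrix n n R) : ℕ :=
  Nat.card {B : Matrix n n R // Bᵀ = B ∧ IsUnit B ∧ K * B + B * Kᵀ = 0}

theorem numSkewForms_eq_of_intertwining {P K L : Matrix n n R} (hP : IsUnit P)
    (h : P * K = L * P) : numSkewForms K = numSkewForms L := by
  obtain ⟨P, rfl⟩ := hP
  obtain ⟨Q, hQ⟩ : IsUnit (P : Matrix n n R)ᵀ := (isUnit_transpose _).2 P.isUnit
  have hQ_transpose : (Q : Matrix n n R)ᵀ = P := by rw [hQ, transpose_transpose]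
  have h_transpose : Kᵀ * (Q : Matrix n n R) = Q * Lᵀ := by
    rw [hQ, ← transpose_mul, ← transpose_mul, h]
  refine Nat.card_congr
    (((Units.mulLeft P).trans (Units.mulRight Q)).subtypeEquiv fun B => ?_)
  change _ ↔ (P * B * Q : Matrix n n R)ᵀ = P * B * Q ∧ IsUnit (P * B * Q : Matrix n n R) ∧
    L * (P * B * Q) + P * B * Q * Lᵀ = 0
  have h_skew : L * (P * B * Q) + P * B * Q * Lᵀ = P * (K * B + B * Kᵀ) * Q := by
    simp only [mul_add, add_mul, mul_assoc, h_transpose]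
    simp only [← mul_assoc, h]
  refine and_congr ?_ (and_congr ?_ ?_)
  · rw [transpose_mul, transpose_mul, hQ_transpose, ← hQ, ← mul_assoc, Units.mul_left_inj,
      Units.mul_right_inj]
  · rw [Units.isUnit_mul_units, Units.isUnit_units_mul]
  · rw [h_skew, Units.mul_left_eq_zero, Units.mul_right_eq_zero]

/-- The Cayley transform `K = (A + ε)⁻¹ (A - ε)` turns invariance under `A` into skewness of `K`:
this is the linearisation of the defining equation. -/
theorem mul_mul_transpose_eq_self_iff_skew {A K B : Matrix n n R} {ε : R} (hε : ε * ε = 1)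
    (h2 : IsUnit (2 : R)) (hA : IsUnit (A + ε • 1)) (hK : (A + ε • 1) * K = A - ε • 1) :
    A * B * Aᵀ = B ↔ K * B + B * Kᵀ = 0 := by
  obtain ⟨D, hD⟩ := hA
  obtain ⟨E, hE⟩ : IsUnit (D : Matrix n n R)ᵀ := (isUnit_transpose _).2 D.isUnit
  have hE' : (E : Matrix n n R) = Aᵀ + ε • 1 := by simp [hE, hD]
  rw [← hD] at hK
  have hK_transpose : Kᵀ * E = Aᵀ - ε • 1 := by
    simpa [hE] using congrArg transpose hK
  have h_factor : D * (K * B + B * Kᵀ) * E = (2 : R) • (A * B * Aᵀ - B) :=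
    calc D * (K * B + B * Kᵀ) * E = D * K * B * E + D * B * (Kᵀ * E) := by
          simp only [mul_add, add_mul, mul_assoc]
      _ = (A - ε • 1) * B * (Aᵀ + ε • 1) + (A + ε • 1) * B * (Aᵀ - ε • 1) := by
          rw [hK, hK_transpose, hE', hD]
      _ = (2 : R) • (A * B * Aᵀ - B) := by
          simp only [add_mul, sub_mul, mul_add, mul_sub, smul_mul_assoc, mul_smul_comm, one_mul,
            mul_one, smul_add, smul_sub, smul_smul, hε]
          module
  rw [← Units.mul_right_eq_zero D, ← Units.mul_left_eq_zero E, h_factor, h2.smul_eq_zero,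
    sub_eq_zero]

theorem numInvariantForms_eq_numSkewForms {A K : Matrix n n R} {ε : R} (hε : ε * ε = 1)
    (h2 : IsUnit (2 : R)) (hA : IsUnit (A + ε • 1)) (hK : (A + ε • 1) * K = A - ε • 1) :
    numInvariantForms A = numSkewForms K :=
  Nat.card_congr <| Equiv.subtypeEquivRight fun _ => and_congr_right fun _ =>
    and_congr_right fun _ => mul_mul_transpose_eq_self_iff_skew hε h2 hA hK

end Forms

section Shift

variable (R : Type*) [CommRing R]

/-- The nilpotent Jordan block of size `n`: ones on the superdiagonal, zeros elsewhere. -/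
def shiftMatrix (n : ℕ) : Matrix (Fin n) (Fin n) R :=
  of fun a b => if (b : ℕ) = a + 1 then 1 else 0

variable {R} {k : ℕ} {α β : Type*}

@[simp]
theorem shiftMatrix_mul_castSucc (X : Matrix (Fin (k + 1)) α R) (a : Fin k) :
    (shiftMatrix R (k + 1) * X) a.castSucc = X a.succ := by
  ext b
  have h_row (c : Fin (k + 1)) : (c : ℕ) = a + 1 ↔ c = a.succ := by simp [Fin.ext_iff]
  simp [shiftMatrix, mul_apply, h_row]

@[simp]
theorem shiftMatrix_mul_last (X : Matrix (Fin (k + 1)) α R) :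
    (shiftMatrix R (k + 1) * X) (Fin.last k) = 0 := by
  ext b
  simp [shiftMatrix, mul_apply, fun c : Fin (k + 1) => c.isLt.ne]

theorem jordanBlock_eq_smul_one_add_shiftMatrix (n : ℕ) (c : R) :
    (of fun a b : Fin n => if a = b then c else if (b : ℕ) = a + 1 then 1 else 0) =
      c • 1 + shiftMatrix R n := by
  ext a b
  by_cases hab : a = b
  · simp [shiftMatrix, hab]
  · simp [shiftMatrix, one_apply, hab]

theorem isUpperTriangular_smul_one_add_shiftMatrix (n : ℕ) (c : R) :
    (c • 1 + shiftMatrix R n).IsUpperTriangular := by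
  intro a b (hab : b < a)
  have : (b : ℕ) ≠ a + 1 := by lia
  simp [shiftMatrix, one_apply, hab.ne', this]

theorem isUnit_iff_of_isUpperTriangular {n : Type*} [Fintype n] [LinearOrder n]
    {M : Matrix n n R} (hM : M.IsUpperTriangular) : IsUnit M ↔ ∀ a, IsUnit (M a a) := by
  rw [isUnit_iff_isUnit_det, det_of_isUpperTriangular hM, IsUnit.prod_univ_iff]

theorem isUnit_smul_one_add_shiftMatrix (n : ℕ) {c : R} (hc : IsUnit c) :
    IsUnit (c • 1 + shiftMatrix R n) := by
  rw [isUnit_iff_of_isUpperTriangular (isUpperTriangular_smul_one_add_shiftMatrix n c)]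
  simpa [shiftMatrix] using fun _ => hc

/-- Row `a` of the intertwining matrix is row `a` of `U ^ a`. -/
theorem exists_isUnit_mul_shiftMatrix {U : Matrix (Fin (k + 1)) (Fin (k + 1)) R} (hU : IsUnit U)
    (hU_tri : U.IsUpperTriangular) (hU_comm : Commute U (shiftMatrix R (k + 1))) :
    ∃ P : Matrix (Fin (k + 1)) (Fin (k + 1)) R,
      IsUnit P ∧ P * (U * shiftMatrix R (k + 1)) = shiftMatrix R (k + 1) * P := by
  have h_tri (j : ℕ) : (U ^ j).IsUpperTriangular := BlockTriangular.pow hU_tri j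
  let P : Matrix (Fin (k + 1)) (Fin (k + 1)) R := of fun a => (U ^ (a : ℕ)) a
  have h_row (X : Matrix (Fin (k + 1)) (Fin (k + 1)) R) (a : Fin (k + 1)) :
      (P * X) a = (U ^ (a : ℕ) * X) a := rfl
  refine ⟨P, ?_, ?_⟩
  · have hP_tri : P.IsUpperTriangular := fun a _ hab => h_tri a hab
    refine (isUnit_iff_of_isUpperTriangular hP_tri).2 fun a => ?_
    exact (isUnit_iff_of_isUpperTriangular (h_tri a)).1 (hU.pow _) a
  · funext a
    rw [h_row, ← mul_assoc, ← pow_succ, (hU_comm.pow_left _).eq]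
    cases a using Fin.lastCases with
    | last => simp only [shiftMatrix_mul_last]
    | cast a => rw [shiftMatrix_mul_castSucc, shiftMatrix_mul_castSucc]; rfl

theorem exists_intertwining_shiftMatrix (k : ℕ) {c : R} (hc : IsUnit c) :
    ∃ P K : Matrix (Fin (k + 1)) (Fin (k + 1)) R, IsUnit P ∧
      (c • 1 + shiftMatrix R (k + 1)) * K = shiftMatrix R (k + 1) ∧
      P * K = shiftMatrix R (k + 1) * P := by
  set N := shiftMatrix R (k + 1)
  set D := c • 1 + N
  have hD_unit : IsUnit D := isUnit_smul_one_add_shiftMatrix (k + 1) hc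
  have : Invertible D := hD_unit.invertible
  have h_comm : Commute D⁻¹ N := by
    rw [← invOf_eq_nonsing_inv]
    exact (Commute.add_left ((Commute.one_left N).smul_left c) (Commute.refl N)).invOf_left
  obtain ⟨P, hP, hPN⟩ := exists_isUnit_mul_shiftMatrix (isUnit_nonsing_inv_iff.2 hD_unit)
    (blockTriangular_inv_of_blockTriangular (isUpperTriangular_smul_one_add_shiftMatrix _ c)) h_comm
  exact ⟨P, D⁻¹ * N, hP, mul_inv_cancel_left_of_invertible D N, hPN⟩

theorem numInvariantForms_jordanBlock_kronecker_one [Fintype β] [DecidableEq β] (k : ℕ) {ε : R}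
    (hε : ε * ε = 1) (h2 : IsUnit (2 : R)) :
    numInvariantForms ((ε • 1 + shiftMatrix R (k + 1)) ⊗ₖ (1 : Matrix β β R)) =
      numSkewForms (shiftMatrix R (k + 1) ⊗ₖ (1 : Matrix β β R)) := by
  have hc : IsUnit (2 * ε) := h2.mul (IsUnit.of_mul_eq_one ε hε)
  obtain ⟨P, K, hP, hK, hPK⟩ := exists_intertwining_shiftMatrix (k := k) hc
  set N := shiftMatrix R (k + 1)
  have h_add : (ε • 1 + N) ⊗ₖ (1 : Matrix β β R) + ε • 1 = ((2 * ε) • 1 + N) ⊗ₖ 1 := by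
    rw [← one_kronecker_one, ← smul_kronecker, ← add_kronecker]
    congr 1
    module
  have h_sub : (ε • 1 + N) ⊗ₖ (1 : Matrix β β R) - ε • 1 = N ⊗ₖ 1 := by
    rw [add_kronecker, smul_kronecker, one_kronecker_one, add_sub_cancel_left]
  calc numInvariantForms ((ε • 1 + N) ⊗ₖ (1 : Matrix β β R))
      = numSkewForms (K ⊗ₖ (1 : Matrix β β R)) := by
        refine numInvariantForms_eq_numSkewForms hε h2 ?_ ?_
        · rw [h_add]
          exact (isUnit_smul_one_add_shiftMatrix _ hc).kronecker isUnit_one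
        · rw [h_add, h_sub, ← mul_kronecker_mul, hK, one_mul]
    _ = numSkewForms (N ⊗ₖ (1 : Matrix β β R)) := by
        refine numSkewForms_eq_of_intertwining (hP.kronecker isUnit_one) ?_
        rw [← mul_kronecker_mul, ← mul_kronecker_mul, hPK]

end Shift

section SkewHankel

variable {R : Type*} [CommRing R] {k : ℕ} {β : Type*}

/-- `M` is `σ`-symmetric: symmetric for `σ = 1`, skew-symmetric for `σ = -1`. -/
def IsEpsSymm (σ : R) (M : Matrix β β R) : Prop :=
  Mᵀ = σ • M

/-- The number of `σ`-symmetric matrices with rows and columns indexed by `β`. -/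
noncomputable def numEpsSymm (σ : R) (β : Type*) : ℕ :=
  Nat.card {M : Matrix β β R // IsEpsSymm σ M}

/-- The number of invertible `σ`-symmetric matrices with rows and columns indexed by `β`. -/
noncomputable def numInvEpsSymm (σ : R) (β : Type*) [Fintype β] [DecidableEq β] : ℕ :=
  Nat.card {M : Matrix β β R // IsEpsSymm σ M ∧ IsUnit M}

/-- The block matrix whose block in position `(a, b)` is `(-1) ^ a • C (a + b)`, where `C s` is
read as `0` for `s > k`. -/
def skewHankel (C : Fin (k + 1) → Matrix β β R) : Matrix (Fin (k + 1) × β) (Fin (k + 1) × β) R :=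
  of fun p r => if h : (p.1 : ℕ) + r.1 ≤ k then
    (-1) ^ (p.1 : ℕ) * C ⟨p.1 + r.1, Nat.lt_succ_of_le h⟩ p.2 r.2 else 0

theorem skewHankel_zero_apply (C : Fin (k + 1) → Matrix β β R) (s : Fin (k + 1)) (x y : β) :
    skewHankel C (0, x) (s, y) = C s x y := by
  simp [skewHankel, s.is_le]

theorem skewHankel_injective :
    Function.Injective (skewHankel : (Fin (k + 1) → Matrix β β R) → _) := fun C D h => by
  ext s x y
  rw [← skewHankel_zero_apply C, h, skewHankel_zero_apply]

theorem transpose_skewHankel_eq_self_iff {C : Fin (k + 1) → Matrix β β R} :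
    (skewHankel C)ᵀ = skewHankel C ↔
      ∀ s : Fin (k + 1), IsEpsSymm ((-1) ^ (s : ℕ)) (C s) := by
  constructor
  · intro h s
    ext x y
    have h_entry := congrFun (congrFun h (s, x)) (0, y)
    rw [transpose_apply, skewHankel_zero_apply] at h_entry
    simpa [skewHankel, s.is_le] using h_entry
  · intro hC
    ext ⟨a, x⟩ ⟨b, y⟩
    by_cases h : (a : ℕ) + b ≤ k
    · have h_entry := congrFun (congrFun (hC ⟨a + b, Nat.lt_succ_of_le h⟩) x) y
      simp only [transpose_apply, Matrix.smul_apply, smul_eq_mul] at h_entry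
      have h_sign : (-1 : R) ^ (b : ℕ) * (-1) ^ (a + b : ℕ) = (-1) ^ (a : ℕ) := by
        rw [pow_add, mul_left_comm, pow_mul_pow_eq_one _ (by simp), mul_one]
      simp [skewHankel, h, add_comm (b : ℕ), h_entry, ← mul_assoc, h_sign]
    · simp [skewHankel, h, add_comm (b : ℕ)]

theorem isUnit_skewHankel_iff [Fintype β] [DecidableEq β] {C : Fin (k + 1) → Matrix β β R} :
    IsUnit (skewHankel C) ↔ IsUnit (C (Fin.last k)) := by
  -- Reversing the order of the block columns makes the matrix block triangular.
  let T := (skewHankel C).submatrix (Equiv.refl _) (Fin.revPerm.prodCongr (Equiv.refl β))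
  have hT : T.BlockTriangular Prod.fst := by
    rintro ⟨a, x⟩ ⟨b, y⟩ (hab : b < a)
    have : ¬ (a : ℕ) + (k - b) ≤ k := by lia
    simp [T, skewHankel, this]
  have h_block (a : Fin (k + 1)) :
      IsUnit (T.toSquareBlock Prod.fst a).det ↔ IsUnit (C (Fin.last k)) := by
    let e : β ≃ {p : Fin (k + 1) × β // p.1 = a} :=
      { toFun x := ⟨(a, x), rfl⟩
        invFun p := p.1.2
        left_inv _ := rfl
        right_inv := by rintro ⟨⟨_, x⟩, rfl⟩; rfl }
    have h_last : (T.toSquareBlock Prod.fst a).submatrix e e =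
        (-1 : R) ^ (a : ℕ) • C (Fin.last k) := by
      ext x y
      have : (a : ℕ) + (k - a) = k := by lia
      simp [T, e, toSquareBlock_def, skewHankel, this, Fin.last]
    rw [← det_submatrix_equiv_self e, h_last, det_smul, isUnit_iff_isUnit_det (C _)]
    simp [IsUnit.mul_iff, IsUnit.pow]
  rw [← isUnit_submatrix_equiv (Equiv.refl _) (Fin.revPerm.prodCongr (Equiv.refl β)),
    isUnit_iff_isUnit_det, hT.det_fintype, IsUnit.prod_univ_iff]
  simp only [h_block, forall_const]

theorem skewHankel_succ_castSucc (C : Fin (k + 1) → Matrix β β R) (a b : Fin k) (x y : β) :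
    skewHankel C (a.succ, x) (b.castSucc, y) = -skewHankel C (a.castSucc, x) (b.succ, y) := by
  by_cases h : (a : ℕ) + b < k <;>
    simp [skewHankel, h, pow_succ, Nat.add_right_comm _ 1, ← add_assoc]

theorem kronecker_one_mul_apply {m n γ : Type*} [Fintype n] [Fintype β] [DecidableEq β]
    (A : Matrix m n R) (M : Matrix (n × β) γ R) (a : m) (x : β) :
    (A ⊗ₖ (1 : Matrix β β R) * M) (a, x) = (A * of fun i => M (i, x)) a := by
  ext r
  simp [mul_apply, Fintype.sum_prod_type, one_apply]

variable [Fintype β] [DecidableEq β]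

local notation "N" => shiftMatrix R (k + 1) ⊗ₖ (1 : Matrix β β R)

theorem shiftMatrix_mul_skewHankel_add_eq_zero (C : Fin (k + 1) → Matrix β β R) :
    N * skewHankel C + skewHankel C * Nᵀ = 0 := by
  have h_right (p r : Fin (k + 1) × β) :
      (skewHankel C * Nᵀ) p r = (N * (skewHankel C)ᵀ) r p := by
    rw [← transpose_apply (skewHankel C * Nᵀ), transpose_mul, transpose_transpose]
  ext ⟨a, x⟩ ⟨b, y⟩
  rw [Matrix.add_apply, h_right, kronecker_one_mul_apply, kronecker_one_mul_apply]
  cases a using Fin.lastCases with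
  | last => cases b using Fin.lastCases <;> simp [skewHankel]
  | cast a => cases b using Fin.lastCases with
    | last => simp [skewHankel]
    | cast b => simp [skewHankel_succ_castSucc]

theorem eq_zero_of_shiftMatrix_mul_add_eq_zero {B : Matrix (Fin (k + 1) × β) (Fin (k + 1) × β) R}
    (hB : N * B + B * Nᵀ = 0) (h0 : ∀ x, B (0, x) = 0) : B = 0 := by
  suffices ∀ a x, B (a, x) = 0 from funext fun p => this p.1 p.2
  intro a
  induction a using Fin.induction with
  | zero => exact h0
  | succ a ih =>
    intro x
    have h_next : (N * B) (a.castSucc, x) = B (a.succ, x) := by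
      rw [kronecker_one_mul_apply, shiftMatrix_mul_castSucc]
      rfl
    have h_prev : (B * Nᵀ) (a.castSucc, x) = 0 := by
      ext r
      simp [mul_apply, ih]
    rw [← h_next, eq_neg_of_add_eq_zero_left hB]
    exact neg_eq_zero.2 h_prev

theorem range_skewHankel :
    Set.range (skewHankel : (Fin (k + 1) → Matrix β β R) → _) = {B | N * B + B * Nᵀ = 0} := by
  refine Set.Subset.antisymm (Set.range_subset_iff.2 shiftMatrix_mul_skewHankel_add_eq_zero) ?_
  intro B (hB : N * B + B * Nᵀ = 0)
  let C : Fin (k + 1) → Matrix β β R := fun s => of fun x y => B (0, x) (s, y)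
  refine ⟨C, (sub_eq_zero.1 (eq_zero_of_shiftMatrix_mul_add_eq_zero ?_ fun x => ?_)).symm⟩
  · rw [mul_sub, sub_mul, sub_add_sub_comm, hB, shiftMatrix_mul_skewHankel_add_eq_zero, sub_zero]
  · ext ⟨s, y⟩
    simp [skewHankel_zero_apply, C]

theorem numSkewForms_shiftMatrix_kronecker_one :
    numSkewForms N =
      (∏ s ∈ Finset.range k, numEpsSymm ((-1 : R) ^ s) β) * numInvEpsSymm ((-1 : R) ^ k) β := by
  have h_forms (B : Matrix (Fin (k + 1) × β) (Fin (k + 1) × β) R) (hB : N * B + B * Nᵀ = 0) :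
      ∃ C, skewHankel C = B := by
    rwa [← Set.mem_range, range_skewHankel]
  let f : {C : Fin (k + 1) → Matrix β β R // ∀ s : Fin (k + 1),
      IsEpsSymm ((-1) ^ (s : ℕ)) (C s) ∧ (s = Fin.last k → IsUnit (C s))} →
      {B // Bᵀ = B ∧ IsUnit B ∧ N * B + B * Nᵀ = 0} := fun C =>
    ⟨skewHankel C.1, transpose_skewHankel_eq_self_iff.2 fun s => (C.2 s).1,
      isUnit_skewHankel_iff.2 ((C.2 _).2 rfl), shiftMatrix_mul_skewHankel_add_eq_zero C.1⟩
  have hf : Function.Bijective f := by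
    refine ⟨fun C D h => Subtype.ext (skewHankel_injective (congrArg Subtype.val h)), ?_⟩
    rintro ⟨B, hB_symm, hB_unit, hB⟩
    obtain ⟨C, rfl⟩ := h_forms B hB
    refine ⟨⟨C, fun s => ⟨transpose_skewHankel_eq_self_iff.1 hB_symm s, ?_⟩⟩, rfl⟩
    rintro rfl
    exact isUnit_skewHankel_iff.1 hB_unit
  have h_card := Nat.card_congr ((Equiv.ofBijective f hf).symm.trans <| Equiv.subtypePiEquivPi
    (p := fun (s : Fin (k + 1)) M =>
      IsEpsSymm ((-1 : R) ^ (s : ℕ)) M ∧ (s = Fin.last k → IsUnit M)))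
  rw [Nat.card_pi, Fin.prod_univ_castSucc] at h_card
  rw [Finset.prod_range]
  simpa [numSkewForms, numEpsSymm, numInvEpsSymm, (Fin.castSucc_lt_last _).ne] using h_card

end SkewHankel

theorem natCard_sigma_of_forall_ne {ι : Type*} {κ : ι → Type*} [Finite ι] [∀ i, Finite (κ i)]
    (i : ι) {c : ℕ} (h : ∀ j ≠ i, Nat.card (κ j) = c) :
    Nat.card (Σ j, κ j) = (Nat.card ι - 1) * c + Nat.card (κ i) := by
  classical
  have := Fintype.ofFinite ι
  rw [Nat.card_sigma, Fintype.sum_eq_add_sum_compl i, add_comm, Finset.sum_congr rfl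
    fun j hj => h j (by simpa using hj)]
  simp [Finset.card_compl]

theorem natCard_sigma_of_forall {ι : Type*} {κ : ι → Type*} [Finite ι] [∀ i, Finite (κ i)]
    {c : ℕ} (h : ∀ i, Nat.card (κ i) = c) : Nat.card (Σ i, κ i) = Nat.card ι * c := by
  have := Fintype.ofFinite ι
  simp [Nat.card_sigma, h]

theorem natCard_matrix (m n R : Type*) [Fintype m] [Fintype n] :
    Nat.card (Matrix m n R) = Nat.card R ^ (Fintype.card m * Fintype.card n) := by
  change Nat.card (m → n → R) = _
  simp only [Nat.card_fun, Nat.card_eq_fintype_card (α := m), Nat.card_eq_fintype_card (α := n),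
    ← pow_mul, mul_comm]

section EpsSymm

variable {R : Type*} [CommRing R] {σ : R} {α β : Type*}

theorem isEpsSymm_submatrix_equiv (e : α ≃ β) {M : Matrix β β R} :
    IsEpsSymm σ (M.submatrix e e) ↔ IsEpsSymm σ M :=
  (reindex e.symm e.symm).injective.eq_iff (a := Mᵀ) (b := σ • M)

theorem numEpsSymm_congr (σ : R) (e : α ≃ β) : numEpsSymm σ α = numEpsSymm σ β :=
  Nat.card_congr <| (reindex e e).subtypeEquiv fun _ => (isEpsSymm_submatrix_equiv e.symm).symm

theorem isEpsSymm_fromBlocks_iff (hσ : σ * σ = 1) {A : Matrix α α R} {B : Matrix α β R}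
    {C : Matrix β α R} {D : Matrix β β R} :
    IsEpsSymm σ (fromBlocks A B C D) ↔ IsEpsSymm σ A ∧ B = σ • Cᵀ ∧ IsEpsSymm σ D := by
  rw [IsEpsSymm, fromBlocks_transpose, fromBlocks_smul, fromBlocks_inj]
  refine and_congr_right fun _ => ⟨?_, ?_⟩
  · rintro ⟨hC, -, hD⟩
    exact ⟨by rw [hC, smul_smul, hσ, one_smul], hD⟩
  · rintro ⟨rfl, hD⟩
    exact ⟨by rw [smul_smul, hσ, one_smul], by simp, hD⟩

theorem natCard_epsSymm_sum (hσ : σ * σ = 1) (P : Matrix (α ⊕ β) (α ⊕ β) R → Prop) :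
    Nat.card {M : Matrix (α ⊕ β) (α ⊕ β) R // IsEpsSymm σ M ∧ P M} =
      Nat.card (Σ A : {A : Matrix α α R // IsEpsSymm σ A}, Σ C : Matrix β α R,
        {D : Matrix β β R // IsEpsSymm σ D ∧ P (fromBlocks A.1 (σ • Cᵀ) C D)}) := by
  have h_blocks (M : Matrix (α ⊕ β) (α ⊕ β) R) (hM : IsEpsSymm σ M) :
      IsEpsSymm σ M.toBlocks₁₁ ∧ M.toBlocks₁₂ = σ • M.toBlocks₂₁ᵀ ∧ IsEpsSymm σ M.toBlocks₂₂ := by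
    rwa [← isEpsSymm_fromBlocks_iff hσ, fromBlocks_toBlocks]
  have h_eq (M : Matrix (α ⊕ β) (α ⊕ β) R) (hM : IsEpsSymm σ M) :
      fromBlocks M.toBlocks₁₁ (σ • M.toBlocks₂₁ᵀ) M.toBlocks₂₁ M.toBlocks₂₂ = M := by
    rw [← (h_blocks M hM).2.1, fromBlocks_toBlocks]
  exact Nat.card_congr
    { toFun M := ⟨⟨M.1.toBlocks₁₁, (h_blocks M M.2.1).1⟩, M.1.toBlocks₂₁,
        ⟨M.1.toBlocks₂₂, (h_blocks M M.2.1).2.2, (h_eq M M.2.1).symm ▸ M.2.2⟩⟩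
      invFun x := ⟨fromBlocks x.1.1 (σ • x.2.1ᵀ) x.2.1 x.2.2.1,
        (isEpsSymm_fromBlocks_iff hσ).2 ⟨x.1.2, rfl, x.2.2.2.1⟩, x.2.2.2.2⟩
      left_inv M := Subtype.ext (h_eq M M.2.1)
      right_inv _ := rfl }

theorem numEpsSymm_sum [Finite R] [Fintype α] [Fintype β] (hσ : σ * σ = 1) :
    numEpsSymm σ (α ⊕ β) = numEpsSymm σ α *
      (Nat.card R ^ (Fintype.card β * Fintype.card α) * numEpsSymm σ β) := by
  have h := natCard_epsSymm_sum (α := α) (β := β) hσ fun _ => True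
  simp only [and_true] at h
  rw [numEpsSymm, h, natCard_sigma_of_forall fun _ => natCard_sigma_of_forall fun _ => rfl,
    natCard_matrix]
  rfl

theorem numEpsSymm_of_isEmpty (σ : R) [IsEmpty α] : numEpsSymm σ α = 1 := by
  rw [numEpsSymm, Nat.card_eq_one_iff_unique]
  exact ⟨inferInstance, ⟨0, Subsingleton.elim _ _⟩⟩

theorem numEpsSymm_fin [Finite R] (hσ : σ * σ = 1) (m : ℕ) :
    numEpsSymm σ (Fin m) = numEpsSymm σ Unit ^ m * Nat.card R ^ m.choose 2 := by
  induction m with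
  | zero => simp [numEpsSymm_of_isEmpty]
  | succ m ih =>
    have e : Fin (m + 1) ≃ Unit ⊕ Fin m := Fintype.equivOfCardEq (by simp [add_comm])
    rw [numEpsSymm_congr σ e, numEpsSymm_sum hσ, ih, Nat.choose_succ_succ']
    simp only [Fintype.card_fin, Fintype.card_unit, Nat.choose_one_right]
    ring

theorem numEpsSymm_one_unit : numEpsSymm (1 : R) Unit = Nat.card R := by
  have h_all (M : Matrix Unit Unit R) : IsEpsSymm 1 M := by
    ext
    simp
  rw [numEpsSymm, Nat.card_congr (Equiv.subtypeUnivEquiv h_all), natCard_matrix]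
  simp

theorem numEpsSymm_neg_one_unit (h2 : IsUnit (2 : R)) : numEpsSymm (-1 : R) Unit = 1 := by
  have h_zero (M : Matrix Unit Unit R) (hM : IsEpsSymm (-1) M) : M = 0 := by
    ext a b
    have h_entry : M a b = -M a b := by simpa using congrFun (congrFun hM a) b
    exact h2.mul_right_eq_zero.1 (by linear_combination h_entry)
  rw [numEpsSymm, Nat.card_eq_one_iff_unique]
  exact ⟨⟨fun A B => Subtype.ext ((h_zero _ A.2).trans (h_zero _ B.2).symm)⟩,
    ⟨0, by simp [IsEpsSymm]⟩⟩

theorem numEpsSymm_one_fin [Finite R] (m : ℕ) :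
    numEpsSymm (1 : R) (Fin m) = Nat.card R ^ (m + 1).choose 2 := by
  rw [numEpsSymm_fin (one_mul 1), numEpsSymm_one_unit, ← pow_add, Nat.choose_succ_succ',
    Nat.choose_one_right]

theorem numEpsSymm_neg_one_fin [Finite R] (h2 : IsUnit (2 : R)) (m : ℕ) :
    numEpsSymm (-1 : R) (Fin m) = Nat.card R ^ m.choose 2 := by
  rw [numEpsSymm_fin (by simp), numEpsSymm_neg_one_unit h2, one_pow, one_mul]

theorem choose_two_add_choose_two (m : ℕ) : (m + 1).choose 2 + m.choose 2 = m ^ 2 := by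
  induction m with
  | zero => rfl
  | succ m ih =>
    have h_succ (n : ℕ) : (n + 1).choose 2 = n + n.choose 2 := by
      rw [Nat.choose_succ_succ', Nat.choose_one_right]
    linear_combination ih + h_succ (m + 1) + h_succ m

theorem prod_range_two_mul_numEpsSymm [Finite R] (h2 : IsUnit (2 : R)) (m l : ℕ) :
    ∏ s ∈ Finset.range (2 * l), numEpsSymm ((-1 : R) ^ s) (Fin m) = Nat.card R ^ (m ^ 2 * l) := by
  induction l with
  | zero => simp
  | succ l ih =>
    rw [Nat.mul_succ, Finset.prod_range_succ, Finset.prod_range_succ, ih]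
    simp only [pow_succ _ (2 * l), (even_two_mul l).neg_one_pow, one_mul, numEpsSymm_one_fin,
      numEpsSymm_neg_one_fin h2, ← pow_add, add_assoc, choose_two_add_choose_two, Nat.mul_succ]

variable [Fintype α] [DecidableEq α] [Fintype β] [DecidableEq β]

theorem numInvEpsSymm_congr (σ : R) (e : α ≃ β) : numInvEpsSymm σ α = numInvEpsSymm σ β :=
  Nat.card_congr <| (reindex e e).subtypeEquiv fun _ => and_congr
    (isEpsSymm_submatrix_equiv e.symm).symm (isUnit_submatrix_equiv e.symm e.symm).symm

theorem numInvEpsSymm_of_isEmpty (σ : R) [IsEmpty α] : numInvEpsSymm σ α = 1 := by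
  rw [numInvEpsSymm, Nat.card_eq_one_iff_unique]
  exact ⟨inferInstance, ⟨0, Subsingleton.elim _ _, isUnit_of_subsingleton _⟩⟩

theorem natCard_isUnit_fromBlocks_of_isUnit (hσ : σ * σ = 1) {A : Matrix α α R}
    (hA : IsEpsSymm σ A) (hA_unit : IsUnit A) (C : Matrix β α R) :
    Nat.card {D : Matrix β β R // IsEpsSymm σ D ∧ IsUnit (fromBlocks A (σ • Cᵀ) C D)} =
      numInvEpsSymm σ β := by
  have : Invertible A := hA_unit.invertible
  have h_inv : (⅟A)ᵀ = σ • ⅟A := by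
    rw [invOf_eq_nonsing_inv, transpose_nonsing_inv, hA, ← invOf_eq_nonsing_inv A]
    refine inv_eq_left_inv ?_
    rw [smul_mul_smul_comm, hσ, one_smul, invOf_mul_self]
  have h_correction : (C * ⅟A * (σ • Cᵀ))ᵀ = σ • (C * ⅟A * (σ • Cᵀ)) := by
    simp only [transpose_mul, transpose_smul, transpose_transpose, h_inv, Matrix.smul_mul,
      Matrix.mul_smul, Matrix.mul_assoc]
  refine Nat.card_congr ((Equiv.subRight (C * ⅟A * (σ • Cᵀ))).subtypeEquiv fun D => ?_)
  rw [isUnit_fromBlocks_iff_of_invertible₁₁, Equiv.subRight_apply]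
  refine and_congr_left fun _ => ?_
  rw [IsEpsSymm, IsEpsSymm, transpose_sub, h_correction, smul_sub, sub_left_inj]

end EpsSymm

section FiniteField

variable {F : Type*} [Field F] {σ : F} {α β γ : Type*} [Fintype α] [DecidableEq α]
  [Fintype β] [DecidableEq β] [Fintype γ] [DecidableEq γ]

theorem isUnit_of_ne_zero_of_unit {A : Matrix Unit Unit F} (hA : A ≠ 0) : IsUnit A := by
  have h_entry : A () () ≠ 0 := fun h => hA (Matrix.ext fun _ _ => h)
  simpa [isUnit_iff_isUnit_det] using h_entry

theorem not_isUnit_fromBlocks_zero_zero [Nonempty α] (B : Matrix α β F) (D : Matrix β β F) :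
    ¬ IsUnit (fromBlocks (0 : Matrix α α F) B (0 : Matrix β α F) D) := by
  rw [isUnit_fromBlocks_zero₂₁, isUnit_iff_isUnit_det, det_zero]
  exact fun h => not_isUnit_zero h.1

/-- The pivot is the `2 × 2` block with rows `(0, σ c)` and `(c, a)`, where `c ≠ 0`. -/
theorem natCard_isUnit_fromBlocks_zero_fromBlocks (hσ : σ * σ = 1)
    {C : Matrix (Unit ⊕ γ) Unit F} (hC : C (Sum.inl ()) () ≠ 0) {A : Matrix Unit Unit F}
    (hA : IsEpsSymm σ A) (E : Matrix γ Unit F) :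
    Nat.card {D : Matrix γ γ F // IsEpsSymm σ D ∧ IsUnit
      (fromBlocks (0 : Matrix Unit Unit F) (σ • Cᵀ) C (fromBlocks A (σ • Eᵀ) E D))} =
      numInvEpsSymm σ γ := by
  let c : Matrix Unit Unit F := of fun _ _ => C (Sum.inl ()) ()
  have hc : IsUnit c := isUnit_of_ne_zero_of_unit fun h => hC (congrFun (congrFun h ()) ())
  let pivot : Matrix (Unit ⊕ Unit) (Unit ⊕ Unit) F := fromBlocks 0 (σ • cᵀ) c A
  have h_pivot : IsEpsSymm σ pivot :=
    (isEpsSymm_fromBlocks_iff hσ).2 ⟨by simp [IsEpsSymm], rfl, hA⟩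
  have h_unit : IsUnit pivot := by
    have hσ_unit : IsUnit σ := IsUnit.of_mul_eq_one σ hσ
    rw [← isUnit_submatrix_equiv (Equiv.refl _) (Equiv.sumComm Unit Unit)]
    have h_swap : pivot.submatrix (Equiv.refl _) (Equiv.sumComm Unit Unit) =
        fromBlocks (σ • cᵀ) 0 A c := fromBlocks_submatrix_sum_swap_right _ _ _ _ id
    rw [h_swap, isUnit_fromBlocks_zero₁₂]
    refine ⟨?_, hc⟩
    simpa [isUnit_iff_isUnit_det, c, hσ_unit.ne_zero] using hC
  let rest : Matrix γ (Unit ⊕ Unit) F := fromCols (of fun g _ => C (Sum.inr g) ()) E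
  rw [← natCard_isUnit_fromBlocks_of_isUnit hσ h_pivot h_unit rest]
  refine Nat.card_congr (Equiv.subtypeEquivRight fun D => and_congr_right fun _ => ?_)
  rw [← isUnit_submatrix_equiv (Equiv.sumAssoc Unit Unit γ) (Equiv.sumAssoc Unit Unit γ)]
  refine Eq.to_iff (congrArg _ ?_)
  ext ((a | a) | a) ((b | b) | b) <;> simp [pivot, rest, c]

theorem natCard_isUnit_fromBlocks_zero_of_apply_inl_ne_zero [Finite F] (hσ : σ * σ = 1)
    {C : Matrix (Unit ⊕ γ) Unit F} (hC : C (Sum.inl ()) () ≠ 0) :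
    Nat.card {D : Matrix (Unit ⊕ γ) (Unit ⊕ γ) F //
      IsEpsSymm σ D ∧ IsUnit (fromBlocks (0 : Matrix Unit Unit F) (σ • Cᵀ) C D)} =
      numEpsSymm σ Unit * (Nat.card F ^ Fintype.card γ * numInvEpsSymm σ γ) := by
  rw [natCard_epsSymm_sum hσ, natCard_sigma_of_forall fun A => natCard_sigma_of_forall fun E =>
    natCard_isUnit_fromBlocks_zero_fromBlocks hσ hC A.2 E, natCard_matrix, Fintype.card_unit,
    mul_one]
  rfl

theorem natCard_isUnit_fromBlocks_zero_of_ne_zero [Finite F] (hσ : σ * σ = 1) (e : β ≃ Unit ⊕ γ)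
    {C : Matrix β Unit F} (hC : C ≠ 0) :
    Nat.card {D : Matrix β β F //
      IsEpsSymm σ D ∧ IsUnit (fromBlocks (0 : Matrix Unit Unit F) (σ • Cᵀ) C D)} =
      numEpsSymm σ Unit * (Nat.card F ^ Fintype.card γ * numInvEpsSymm σ γ) := by
  obtain ⟨j, hj⟩ : ∃ j, C j () ≠ 0 := by
    by_contra! h
    exact hC (Matrix.ext fun a _ => h a)
  let f : β ≃ Unit ⊕ γ := e.trans (Equiv.swap (e j) (Sum.inl ()))
  have hf : f.symm (Sum.inl ()) = j := by simp [f]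
  rw [← natCard_isUnit_fromBlocks_zero_of_apply_inl_ne_zero (C := C.submatrix f.symm id) hσ
    (by rwa [submatrix_apply, hf])]
  refine Nat.card_congr ((reindex f f).subtypeEquiv fun D => and_congr
    (isEpsSymm_submatrix_equiv f.symm).symm ?_)
  rw [← isUnit_submatrix_equiv (Equiv.sumCongr (Equiv.refl Unit) f.symm)
    (Equiv.sumCongr (Equiv.refl Unit) f.symm)]
  refine Eq.to_iff (congrArg _ ?_)
  ext (a | a) (b | b) <;> simp

theorem natCard_sigma_isUnit_fromBlocks_zero [Finite F] (hσ : σ * σ = 1) (m : ℕ) :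
    Nat.card (Σ C : Matrix (Fin m) Unit F, {D : Matrix (Fin m) (Fin m) F //
      IsEpsSymm σ D ∧ IsUnit (fromBlocks (0 : Matrix Unit Unit F) (σ • Cᵀ) C D)}) =
      (Nat.card F ^ m - 1) *
        (numEpsSymm σ Unit * (Nat.card F ^ (m - 1) * numInvEpsSymm σ (Fin (m - 1)))) := by
  have h_zero : Nat.card {D : Matrix (Fin m) (Fin m) F // IsEpsSymm σ D ∧
      IsUnit (fromBlocks (0 : Matrix Unit Unit F) (σ • (0 : Matrix (Fin m) Unit F)ᵀ) 0 D)} = 0 :=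
    Nat.card_eq_zero.2 <| Or.inl ⟨fun D => not_isUnit_fromBlocks_zero_zero _ _ D.2.2⟩
  have h_ne (C : Matrix (Fin m) Unit F) (hC : C ≠ 0) : Nat.card {D : Matrix (Fin m) (Fin m) F //
      IsEpsSymm σ D ∧ IsUnit (fromBlocks (0 : Matrix Unit Unit F) (σ • Cᵀ) C D)} =
      numEpsSymm σ Unit * (Nat.card F ^ (m - 1) * numInvEpsSymm σ (Fin (m - 1))) := by
    cases m with
    | zero => exact absurd (Subsingleton.elim C 0) hC
    | succ m =>
      have e : Fin (m + 1) ≃ Unit ⊕ Fin m := Fintype.equivOfCardEq (by simp [add_comm])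
      rw [natCard_isUnit_fromBlocks_zero_of_ne_zero hσ e hC, Fintype.card_fin,
        Nat.add_sub_cancel]
  rw [natCard_sigma_of_forall_ne 0 h_ne, h_zero, add_zero, natCard_matrix, Fintype.card_fin,
    Fintype.card_unit, mul_one]

/-- The two summands count the matrices whose top-left entry is nonzero, resp. zero. For
`m = 0` the truncated `m - 1` is harmless, because the second summand has the factor `0`. -/
theorem numInvEpsSymm_succ [Finite F] (hσ : σ * σ = 1) (m : ℕ) :
    numInvEpsSymm σ (Fin (m + 1)) =
      (numEpsSymm σ Unit - 1) * (Nat.card F ^ m * numInvEpsSymm σ (Fin m)) +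
      (Nat.card F ^ m - 1) *
        (numEpsSymm σ Unit * (Nat.card F ^ (m - 1) * numInvEpsSymm σ (Fin (m - 1)))) := by
  have e : Fin (m + 1) ≃ Unit ⊕ Fin m := Fintype.equivOfCardEq (by simp [add_comm])
  rw [numInvEpsSymm_congr σ e, numInvEpsSymm, natCard_epsSymm_sum hσ,
    natCard_sigma_of_forall_ne ⟨0, by simp [IsEpsSymm]⟩ fun A hA => ?_,
    natCard_sigma_isUnit_fromBlocks_zero hσ]
  · rfl
  · have hA_unit : IsUnit A.1 := isUnit_of_ne_zero_of_unit fun h => hA (Subtype.ext h)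
    rw [natCard_sigma_of_forall fun C =>
      natCard_isUnit_fromBlocks_of_isUnit hσ A.2 hA_unit C, natCard_matrix]
    simp

theorem isUnit_two_of_odd_card [Fintype F] (h : Odd (Fintype.card F)) : IsUnit (2 : F) := by
  refine (Ring.two_ne_zero fun h_char => ?_).isUnit
  exact Nat.not_even_iff_odd.2 h (Nat.even_iff.2 (FiniteField.even_card_iff_char_two.1 h_char))

variable [Finite F]

theorem numInvEpsSymm_neg_one_odd (h2 : IsUnit (2 : F)) (n : ℕ) :
    numInvEpsSymm (-1 : F) (Fin (2 * n + 1)) = 0 := by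
  induction n with
  | zero => simp [numInvEpsSymm_succ, numEpsSymm_neg_one_unit h2]
  | succ n ih =>
    simp [Nat.mul_succ, numInvEpsSymm_succ _ (2 * n + 2), numEpsSymm_neg_one_unit h2, ih]

theorem numInvEpsSymm_neg_one_even (h2 : IsUnit (2 : F)) (n : ℕ) :
    numInvEpsSymm (-1 : F) (Fin (2 * n)) =
      Nat.card F ^ (n * (n - 1)) * ∏ j ∈ Finset.range n, (Nat.card F ^ (2 * j + 1) - 1) := by
  induction n with
  | zero => simp [numInvEpsSymm_of_isEmpty]
  | succ n ih =>
    have h_exp : (n + 1) * (n + 1 - 1) = n * (n - 1) + 2 * n := by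
      cases n with
      | zero => rfl
      | succ n =>
        simp only [Nat.add_sub_cancel]
        ring
    rw [Nat.mul_succ, numInvEpsSymm_succ (by simp), numEpsSymm_neg_one_unit h2,
      Nat.add_sub_cancel, ih, Finset.prod_range_succ, h_exp]
    ring

theorem numInvEpsSymm_one_even_and_odd (n : ℕ) :
    numInvEpsSymm (1 : F) (Fin (2 * n)) =
      Nat.card F ^ (n * (n + 1)) * ∏ j ∈ Finset.range n, (Nat.card F ^ (2 * j + 1) - 1) ∧
    numInvEpsSymm (1 : F) (Fin (2 * n + 1)) =
      Nat.card F ^ (n * (n + 1)) * ∏ j ∈ Finset.range (n + 1), (Nat.card F ^ (2 * j + 1) - 1) := by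
  have hF : 1 ≤ Nat.card F := Nat.card_pos
  induction n with
  | zero => simp [numInvEpsSymm_of_isEmpty, numInvEpsSymm_succ, numEpsSymm_one_unit]
  | succ n ih =>
    obtain ⟨ih_even, ih_odd⟩ := ih
    have h_even : numInvEpsSymm (1 : F) (Fin (2 * n + 1 + 1)) =
        Nat.card F ^ ((n + 1) * (n + 2)) *
          ∏ j ∈ Finset.range (n + 1), (Nat.card F ^ (2 * j + 1) - 1) := by
      rw [numInvEpsSymm_succ (one_mul 1), numEpsSymm_one_unit, ih_odd, Nat.add_sub_cancel, ih_even,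
        Finset.prod_range_succ]
      linear_combination (Nat.card F ^ (2 * n + 1) * Nat.card F ^ (n * (n + 1)) *
        (∏ j ∈ Finset.range n, (Nat.card F ^ (2 * j + 1) - 1)) * (Nat.card F ^ (2 * n + 1) - 1)) *
          Nat.sub_add_cancel hF
    refine ⟨h_even, ?_⟩
    have h_telescope : (Nat.card F - 1) * Nat.card F ^ (2 * n + 2) + (Nat.card F ^ (2 * n + 2) - 1)
        = Nat.card F ^ (2 * (n + 1) + 1) - 1 := by
      have h_pos : 1 ≤ Nat.card F ^ (2 * n + 2) := Nat.one_le_pow _ _ hF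
      have h_le : Nat.card F ^ (2 * n + 2) ≤ Nat.card F * Nat.card F ^ (2 * n + 2) :=
        Nat.le_mul_of_pos_left _ hF
      rw [Nat.sub_one_mul, pow_succ' _ (2 * (n + 1)), Nat.mul_succ]
      lia
    rw [Nat.mul_succ, numInvEpsSymm_succ (one_mul 1), numEpsSymm_one_unit, h_even,
      Nat.add_sub_cancel (2 * n + 1) 1, ih_odd, Finset.prod_range_succ _ (n + 1), ← h_telescope]
    ring

variable {ε : F} (hε : ε * ε = 1) (h2 : IsUnit (2 : F))
include hε h2

theorem numInvariantForms_jordanBlock_odd (l m : ℕ) :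
    numInvariantForms ((ε • 1 + shiftMatrix F (2 * l + 1)) ⊗ₖ (1 : Matrix (Fin m) (Fin m) F)) =
      Nat.card F ^ (((2 * l + 1) * m ^ 2 + m) / 2 - ((m + 1) / 2) ^ 2) *
        ∏ j ∈ Finset.range ((m + 1) / 2), (Nat.card F ^ (2 * j + 1) - 1) := by
  rw [numInvariantForms_jordanBlock_kronecker_one _ hε h2, numSkewForms_shiftMatrix_kronecker_one,
    prod_range_two_mul_numEpsSymm h2, (even_two_mul l).neg_one_pow]
  rcases Nat.even_or_odd' m with ⟨n, rfl | rfl⟩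
  · have h_half : (2 * n + 1) / 2 = n := by lia
    have h_double : (2 * l + 1) * (2 * n) ^ 2 + 2 * n =
        2 * ((2 * n) ^ 2 * l + n * (n + 1) + n ^ 2) := by ring
    rw [(numInvEpsSymm_one_even_and_odd n).1, ← mul_assoc, ← pow_add, h_half, h_double,
      Nat.mul_div_cancel_left _ two_pos, Nat.add_sub_cancel]
  · have h_half : (2 * n + 1 + 1) / 2 = n + 1 := by lia
    have h_double : (2 * l + 1) * (2 * n + 1) ^ 2 + (2 * n + 1) =
        2 * ((2 * n + 1) ^ 2 * l + n * (n + 1) + (n + 1) ^ 2) := by ring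
    rw [(numInvEpsSymm_one_even_and_odd n).2, ← mul_assoc, ← pow_add, h_half, h_double,
      Nat.mul_div_cancel_left _ two_pos, Nat.add_sub_cancel]

theorem numInvariantForms_jordanBlock_even (l n : ℕ) :
    numInvariantForms ((ε • 1 + shiftMatrix F (2 * (l + 1))) ⊗ₖ
        (1 : Matrix (Fin (2 * n)) (Fin (2 * n)) F)) =
      Nat.card F ^ (2 * (l + 1) * (2 * n) ^ 2 / 2 - (2 * n) ^ 2 / 4) *
        ∏ j ∈ Finset.range n, (Nat.card F ^ (2 * j + 1) - 1) := by
  have h_exp : (2 * n) ^ 2 * l + (2 * n + 1).choose 2 + n * (n - 1) =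
      2 * (l + 1) * (2 * n) ^ 2 / 2 - (2 * n) ^ 2 / 4 := by
    have h_choose : (2 * n + 1).choose 2 = 2 * n ^ 2 + n := by
      rw [Nat.choose_two_right, Nat.add_sub_cancel]
      exact Nat.div_eq_of_eq_mul_left two_pos (by ring)
    have h_sub : n * (n - 1) + n = n ^ 2 := by
      cases n with
      | zero => rfl
      | succ n =>
        simp only [Nat.add_sub_cancel]
        ring
    have h_four : (2 * n) ^ 2 = 4 * n ^ 2 := by ring
    rw [mul_assoc 2, Nat.mul_div_cancel_left _ two_pos, h_four,
      Nat.mul_div_cancel_left _ four_pos, h_choose]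
    lia
  rw [← h_exp, Nat.mul_succ, numInvariantForms_jordanBlock_kronecker_one _ hε h2,
    numSkewForms_shiftMatrix_kronecker_one, Finset.prod_range_succ,
    prod_range_two_mul_numEpsSymm h2, (even_two_mul l).neg_one_pow, numEpsSymm_one_fin,
    (odd_two_mul_add_one l).neg_one_pow, numInvEpsSymm_neg_one_even h2, ← mul_assoc, ← pow_add,
    ← pow_add]

theorem numInvariantForms_jordanBlock_even_odd (l n : ℕ) :
    numInvariantForms ((ε • 1 + shiftMatrix F (2 * (l + 1))) ⊗ₖ
      (1 : Matrix (Fin (2 * n + 1)) (Fin (2 * n + 1)) F)) = 0 := by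
  rw [Nat.mul_succ, numInvariantForms_jordanBlock_kronecker_one _ hε h2,
    numSkewForms_shiftMatrix_kronecker_one, (odd_two_mul_add_one l).neg_one_pow,
    numInvEpsSymm_neg_one_odd h2, mul_zero]

end FiniteField

/-- The value of the counting function `F` on a block-diagonal sum of `m` copies of the
`i × i` Jordan block with eigenvalue `ε ∈ {1, -1}`, over a finite field of odd
prime-power order `q`. -/
theorem stmt3 (q : ℕ) (hq : ∃ p k, Nat.Prime p ∧ 0 < k ∧ q = p ^ k) (hodd : Odd q)
    (F : Type*) [Field F] [Fintype F] (hF : Fintype.card F = q)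
    (ε : F) (hε : ε = 1 ∨ ε = -1) (i m : ℕ) (hi : 1 ≤ i) (hm : 1 ≤ m) :
    let J : Matrix (Fin i) (Fin i) F :=
      Matrix.of fun a b => if a = b then ε else if (b : ℕ) = (a : ℕ) + 1 then 1 else 0
    let A : Matrix (Fin i × Fin m) (Fin i × Fin m) F :=
      Matrix.blockDiagonal fun _ : Fin m => J
    let FA : ℕ := Nat.card {B : Matrix (Fin i × Fin m) (Fin i × Fin m) F //
      B.transpose = B ∧ IsUnit B ∧ A * B * A.transpose = B}
    (Odd i → FA = q ^ ((i * m ^ 2 + m) / 2 - ((m + 1) / 2) ^ 2) *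
        ∏ j ∈ Finset.range ((m + 1) / 2), (q ^ (2 * (j + 1) - 1) - 1)) ∧
    (Even i → Even m → FA = q ^ (i * m ^ 2 / 2 - m ^ 2 / 4) *
        ∏ j ∈ Finset.range (m / 2), (q ^ (2 * (j + 1) - 1) - 1)) ∧
    (Even i → Odd m → FA = 0) := by
  intro J A FA
  have h2 : IsUnit (2 : F) := isUnit_two_of_odd_card (hF ▸ hodd)
  have hεε : ε * ε = 1 := mul_self_eq_one_iff.2 hε
  have hFA : FA = numInvariantForms
      ((ε • 1 + shiftMatrix F i) ⊗ₖ (1 : Matrix (Fin m) (Fin m) F)) := by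
    rw [← jordanBlock_eq_smul_one_add_shiftMatrix, kronecker_one]
    rfl
  have h_even (h : Even i) : ∃ l, i = 2 * (l + 1) := by
    obtain ⟨l, rfl⟩ := h.two_dvd
    exact ⟨l - 1, by lia⟩
  rw [hFA, ← hF, ← Nat.card_eq_fintype_card]
  refine ⟨?_, ?_, ?_⟩
  · rintro ⟨l, rfl⟩
    exact numInvariantForms_jordanBlock_odd hεε h2 l m
  · intro h_even_i h_even_m
    obtain ⟨l, rfl⟩ := h_even h_even_i
    obtain ⟨n, rfl⟩ := h_even_m.two_dvd
    rw [Nat.mul_div_cancel_left n two_pos]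
    exact numInvariantForms_jordanBlock_even hεε h2 l n
  · rintro h_even_i ⟨n, rfl⟩
    obtain ⟨l, rfl⟩ := h_even h_even_i
    exact numInvariantForms_jordanBlock_even_odd hεε h2 l n
end

section
/- Let 𝔽_q be a finite field with q elements, n ≥ 1, and A an invertible n×n matrix over 𝔽_q such that the characteristic polynomials of A and of A⁻¹ are coprime in 𝔽_q[X]. Let t be the 2n×2n block-diagonal matrix with diagonal blocks A and (Aᵀ)⁻¹. Then the number of 2n×2n matrices B over 𝔽_q with Bᵀ = B, B invertible, and t·B·tᵀ = B equals the number of invertible n×n matrices Q over 𝔽_q with Q·A = A·Q (the order of the centralizer of A in GL_n(𝔽_q)). -/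
/-!
Put `D = (Aᵀ)⁻¹`. Since `t = A ⊕ D` has `tᵀ = (D ⊕ A)⁻¹`, the condition `t * B * tᵀ = B` says that
`B` intertwines `A ⊕ D` with `D ⊕ A`. An intertwiner `X` of two matrices with coprime
characteristic polynomials vanishes: applying a Bézout relation to both matrices gives `X = 0`
by Cayley–Hamilton. As `D` has the characteristic polynomial of `A⁻¹`, the diagonal blocks of `B`
are zero, and the upper right block `Q` commutes with `A`; symmetry forces the lower left block
to be `Qᵀ`.
-/

section Intertwiners

open Matrix Polynomial

variable {m n R : Type*} [Fintype m] [DecidableEq m] [Fintype n] [DecidableEq n] [CommRing R]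
  {M : Matrix m m R} {N : Matrix n n R}

theorem aeval_mul_eq_mul_aeval {X : Matrix m n R} (h : M * X = X * N) (p : R[X]) :
    aeval M p * X = X * aeval N p := by
  induction p using Polynomial.induction_on with
  | C a => simp [Algebra.algebraMap_eq_smul_one]
  | add p q hp hq => simp only [map_add, Matrix.add_mul, Matrix.mul_add, hp, hq]
  | monomial k a ih =>
    rw [pow_succ, ← mul_assoc, map_mul (aeval M) _ Polynomial.X, map_mul (aeval N) _ Polynomial.X,
      aeval_X, aeval_X, Matrix.mul_assoc, h, ← Matrix.mul_assoc, ih, Matrix.mul_assoc]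

theorem eq_zero_of_mul_eq_mul_of_isCoprime {X : Matrix m n R} {p q : R[X]} (h : M * X = X * N)
    (hpq : IsCoprime p q) (hp : aeval M p = 0) (hq : aeval N q = 0) : X = 0 := by
  obtain ⟨u, v, huv⟩ := hpq
  calc
    X = aeval M (u * p + v * q) * X := by rw [huv, map_one, Matrix.one_mul]
    _ = aeval M (v * q) * X := by rw [map_add, map_mul _ u, hp, mul_zero, zero_add]
    _ = X * aeval N (v * q) := aeval_mul_eq_mul_aeval h _
    _ = 0 := by rw [map_mul, hq, mul_zero, Matrix.mul_zero]

theorem fromBlocks_mul_eq_mul_fromBlocks_swap_iff (hMN : IsCoprime M.charpoly N.charpoly)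
    {P : Matrix m n R} {Q : Matrix m m R} {S : Matrix n n R} {T : Matrix n m R} :
    fromBlocks M 0 0 N * fromBlocks P Q S T = fromBlocks P Q S T * fromBlocks N 0 0 M ↔
      P = 0 ∧ Q * M = M * Q ∧ S * N = N * S ∧ T = 0 := by
  have hP : M * P = P * N ↔ P = 0 :=
    ⟨fun h ↦ eq_zero_of_mul_eq_mul_of_isCoprime h hMN (aeval_self_charpoly M)
      (aeval_self_charpoly N), by rintro rfl; simp⟩
  have hT : N * T = T * M ↔ T = 0 :=
    ⟨fun h ↦ eq_zero_of_mul_eq_mul_of_isCoprime h hMN.symm (aeval_self_charpoly N)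
      (aeval_self_charpoly M), by rintro rfl; simp⟩
  simp only [fromBlocks_multiply, fromBlocks_inj, Matrix.zero_mul, Matrix.mul_zero, add_zero,
    zero_add, hP, hT, eq_comm (a := M * Q), eq_comm (a := N * S)]

end Intertwiners

section SymmetricForms

open Matrix

variable {n R : Type*} [Fintype n] [DecidableEq n] [CommRing R] {A : Matrix n n R}

theorem mul_eq_iff_eq_mul_of_mul_eq_one {m : Type*} {M N : Matrix n n R} (h : M * N = 1)
    (X Y : Matrix m n R) : X * M = Y ↔ X = Y * N := by
  have := invertibleOfLeftInverse N M h
  rw [← inv_eq_left_inv h, mul_inv_eq_iff_eq_mul_of_invertible]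

theorem isUnit_fromBlocks_zero_zero_iff {Q S : Matrix n n R} :
    IsUnit (fromBlocks 0 Q S 0) ↔ IsUnit Q ∧ IsUnit S := by
  rw [← isUnit_submatrix_equiv (Equiv.refl _) (Equiv.sumComm n n), Equiv.coe_refl,
    Equiv.sumComm_apply, fromBlocks_submatrix_sum_swap_right, submatrix_id_id,
    isUnit_fromBlocks_zero₂₁]

theorem transpose_mul_transpose_inv_comm {Q : Matrix n n R} (h : Q * A = A * Q) :
    Qᵀ * Aᵀ⁻¹ = Aᵀ⁻¹ * Qᵀ := by
  have hcomm : Commute Qᵀ Aᵀ := by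
    rw [commute_iff_eq, ← transpose_mul, ← transpose_mul, h]
  simpa only [Matrix.zpow_neg_one] using (Matrix.Commute.zpow_right hcomm (-1)).eq

theorem transpose_fromBlocks_mul_fromBlocks_eq_one (hA : IsUnit A) :
    (fromBlocks A 0 0 Aᵀ⁻¹)ᵀ * fromBlocks Aᵀ⁻¹ 0 0 A = 1 := by
  have hdet := (isUnit_iff_isUnit_det A).1 hA
  simp only [fromBlocks_transpose, transpose_zero, transpose_nonsing_inv, transpose_transpose,
    fromBlocks_multiply, Matrix.mul_zero, Matrix.zero_mul, add_zero, zero_add,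
    nonsing_inv_mul _ hdet, mul_nonsing_inv _ (isUnit_det_transpose A hdet), fromBlocks_one]

theorem transpose_eq_and_mul_mul_transpose_eq_iff (hA : IsUnit A)
    (hcop : IsCoprime A.charpoly A⁻¹.charpoly) (B : Matrix (n ⊕ n) (n ⊕ n) R) :
    Bᵀ = B ∧ fromBlocks A 0 0 Aᵀ⁻¹ * B * (fromBlocks A 0 0 Aᵀ⁻¹)ᵀ = B ↔
      ∃ Q, Q * A = A * Q ∧ fromBlocks 0 Q Qᵀ 0 = B := by
  have hcop' : IsCoprime A.charpoly Aᵀ⁻¹.charpoly := by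
    rwa [← transpose_nonsing_inv, charpoly_transpose]
  rw [mul_eq_iff_eq_mul_of_mul_eq_one (transpose_fromBlocks_mul_fromBlocks_eq_one hA)]
  constructor
  · rintro ⟨hsymm, hfix⟩
    rw [← fromBlocks_toBlocks B] at hsymm hfix ⊢
    obtain ⟨-, hQ, -, -⟩ := isSymm_fromBlocks_iff.1 hsymm
    obtain ⟨hP, hcomm, -, hT⟩ := (fromBlocks_mul_eq_mul_fromBlocks_swap_iff hcop').1 hfix
    exact ⟨B.toBlocks₁₂, hcomm, by rw [hP, hQ, hT]⟩
  · rintro ⟨Q, hcomm, rfl⟩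
    exact ⟨isSymm_zero.fromBlocks rfl isSymm_zero, (fromBlocks_mul_eq_mul_fromBlocks_swap_iff
      hcop').2 ⟨rfl, hcomm, transpose_mul_transpose_inv_comm hcomm, rfl⟩⟩

theorem stmt4_general (hA : IsUnit A) (hcop : IsCoprime A.charpoly A⁻¹.charpoly) :
    Set.BijOn (fun Q ↦ fromBlocks 0 Q Qᵀ 0) {Q | IsUnit Q ∧ Q * A = A * Q}
      {B : Matrix (n ⊕ n) (n ⊕ n) R |
        Bᵀ = B ∧ IsUnit B ∧ fromBlocks A 0 0 Aᵀ⁻¹ * B * (fromBlocks A 0 0 Aᵀ⁻¹)ᵀ = B} := by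
  have isUnit_iff (Q : Matrix n n R) : IsUnit (fromBlocks 0 Q Qᵀ 0) ↔ IsUnit Q := by
    rw [isUnit_fromBlocks_zero_zero_iff, isUnit_transpose, and_self]
  refine ⟨fun Q ⟨hQ, hcomm⟩ ↦ ?_, fun Q _ Q' _ h ↦ (fromBlocks_inj.1 h).2.1,
    fun B ⟨hsymm, hB, hfix⟩ ↦ ?_⟩
  · obtain ⟨hsymm, hfix⟩ := (transpose_eq_and_mul_mul_transpose_eq_iff hA hcop _).2 ⟨Q, hcomm, rfl⟩
    exact ⟨hsymm, (isUnit_iff Q).2 hQ, hfix⟩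
  · obtain ⟨Q, hcomm, rfl⟩ := (transpose_eq_and_mul_mul_transpose_eq_iff hA hcop B).1 ⟨hsymm, hfix⟩
    exact ⟨Q, ⟨(isUnit_iff Q).1 hB, hcomm⟩, rfl⟩

end SymmetricForms

/-- If the characteristic polynomials of `A` and `A⁻¹` are coprime, then the number of
invertible symmetric matrices preserved by `t = A ⊕ (Aᵀ)⁻¹` equals the order of the
centralizer of `A` in `GL_n(𝔽_q)`. -/
theorem stmt4 (q n : ℕ) (hn : 1 ≤ n) (F : Type*) [Field F] [Fintype F]
    (hF : Fintype.card F = q)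
    (A : Matrix (Fin n) (Fin n) F) (hA : IsUnit A)
    (hcop : IsCoprime (Matrix.charpoly A) (Matrix.charpoly A⁻¹)) :
    Nat.card {B : Matrix (Fin n ⊕ Fin n) (Fin n ⊕ Fin n) F //
        B.transpose = B ∧ IsUnit B ∧
        (Matrix.fromBlocks A 0 0 (A.transpose)⁻¹) * B *
          (Matrix.fromBlocks A 0 0 (A.transpose)⁻¹).transpose = B} =
      Nat.card {Q : Matrix (Fin n) (Fin n) F // IsUnit Q ∧ Q * A = A * Q} := by
  exact (Nat.card_congr (Set.BijOn.equiv _ (stmt4_general hA hcop))).symm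
end

section
/- Let q be an odd prime power, n an odd positive integer, and K a finite field with q^n elements. Then the set { x ∈ Kˣ : x^{q^i + 1} = 1 for some integer i ≥ 0 } equals {1, −1}; in particular it has exactly 2 elements. -/
/-!
Since `n` is odd, `qⁱ + 1` divides `(qⁱ)ⁿ + 1 = (qⁿ)ⁱ + 1`. An element `x` fixed by `y ↦ y ^ qⁿ`
with `x ^ (qⁱ + 1) = 1` therefore satisfies `x ^ 2 = x ^ ((qⁿ)ⁱ + 1) = 1`.
-/

section Monoid

variable {M : Type*} [Monoid M] {x : M}

theorem pow_pow_add_one_eq_one_of_odd {a n : ℕ} (hn : Odd n) (hx : x ^ (a + 1) = 1) :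
    x ^ (a ^ n + 1) = 1 := by
  have hdvd : a + 1 ∣ a ^ n + 1 := by
    simpa only [one_pow] using hn.nat_add_dvd_pow_add_pow a 1
  exact orderOf_dvd_iff_pow_eq_one.mp ((orderOf_dvd_of_pow_eq_one hx).trans hdvd)

theorem pow_pow_eq_self {m : ℕ} (hx : x ^ m = x) (i : ℕ) : x ^ m ^ i = x := by
  have hfixed : Function.IsFixedPt (fun y : M ↦ y ^ m) x := hx
  simpa only [pow_iterate] using (hfixed.iterate i).eq

theorem sq_eq_one_of_pow_pow_add_one_eq_one {q n i : ℕ} (hn : Odd n) (hfix : x ^ q ^ n = x)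
    (hx : x ^ (q ^ i + 1) = 1) : x ^ 2 = 1 :=
  calc
    x ^ 2 = x ^ (q ^ n) ^ i * x := by rw [pow_pow_eq_self hfix, sq]
    _ = x ^ ((q ^ i) ^ n + 1) := by rw [pow_succ, pow_right_comm]
    _ = 1 := pow_pow_add_one_eq_one_of_odd hn hx

end Monoid

theorem units_pow_card {K : Type*} [GroupWithZero K] [Fintype K] (u : Kˣ) :
    u ^ Fintype.card K = u :=
  Units.ext (by rw [Units.val_pow_eq_pow_val, FiniteField.pow_card])

theorem ne_neg_of_odd_natCard {A : Type*} [AddGroup A] (hA : Odd (Nat.card A)) {a : A}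
    (ha : a ≠ 0) : a ≠ -a := by
  intro h
  have htwo : 2 • a = 2 • (0 : A) := by
    rw [two_nsmul, smul_zero, ← eq_neg_iff_add_eq_zero]
    exact h
  exact ha ((nsmulCoprime hA.coprime_two_right).injective htwo)

theorem units_sq_eq_one_iff {R : Type*} [Ring R] [NoZeroDivisors R] {u : Rˣ} :
    u ^ 2 = 1 ↔ u = 1 ∨ u = -1 := by
  rw [sq, mul_eq_one_iff_inv_eq, Units.inv_eq_self_iff]

theorem setOf_exists_units_pow_pow_add_one_eq_one {R : Type*} [Ring R] [NoZeroDivisors R]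
    {q n : ℕ} (hn : Odd n) (hfix : ∀ u : Rˣ, u ^ q ^ n = u) :
    {u : Rˣ | ∃ i : ℕ, u ^ (q ^ i + 1) = 1} = {1, -1} := by
  ext u
  change (∃ i : ℕ, u ^ (q ^ i + 1) = 1) ↔ u = 1 ∨ u = -1
  rw [← units_sq_eq_one_iff]
  constructor
  · rintro ⟨i, hi⟩
    exact sq_eq_one_of_pow_pow_add_one_eq_one hn (hfix u) hi
  · intro hu
    exact ⟨0, by rwa [pow_zero]⟩

theorem stmt7_general {R : Type*} [Ring R] [NoZeroDivisors R] (hR : (1 : R) ≠ -1)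
    {q n : ℕ} (hn : Odd n) (hfix : ∀ u : Rˣ, u ^ q ^ n = u) :
    {u : Rˣ | ∃ i : ℕ, u ^ (q ^ i + 1) = 1} = {1, -1} ∧
      Nat.card {u : Rˣ // ∃ i : ℕ, u ^ (q ^ i + 1) = 1} = 2 := by
  have hset := setOf_exists_units_pow_pow_add_one_eq_one hn hfix
  have hne : (1 : Rˣ) ≠ -1 := fun h ↦ hR (congrArg Units.val h)
  refine ⟨hset, ?_⟩
  rw [← Set.coe_ofPred, hset, Nat.card_coe_set_eq, Set.ncard_pair hne]

/-- In a finite field of order `q^n` with `q` an odd prime power and `n` odd, the set of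
units `x` with `x^(qⁱ+1) = 1` for some `i ≥ 0` is exactly `{1, -1}`, of cardinality `2`. -/
theorem stmt7 (q n : ℕ) (hq : ∃ p k, Nat.Prime p ∧ 0 < k ∧ q = p ^ k) (hqodd : Odd q)
    (hn : Odd n) (hnpos : 0 < n)
    (K : Type*) [Field K] [Fintype K] (hK : Fintype.card K = q ^ n) :
    {x : Kˣ | ∃ i : ℕ, x ^ (q ^ i + 1) = 1} = {1, -1} ∧
      Nat.card {x : Kˣ // ∃ i : ℕ, x ^ (q ^ i + 1) = 1} = 2 := by
  have hodd : Odd (Nat.card K) := by simpa only [Nat.card_eq_fintype_card, hK] using hqodd.pow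
  exact stmt7_general (ne_neg_of_odd_natCard hodd one_ne_zero) hn (hK ▸ units_pow_card)
end

section
/- For every partition π, writing r_m for the multiplicity of m in π, one has C_π = ∏_{m ≥ 1} C_{(m^{r_m})} and D_π = ∏_{m ≥ 1} D_{(m^{r_m})}, where (m^{r_m}) denotes the partition with r_m parts all equal to m (the products have only finitely many factors different from 1). -/
/-- For a partition (multiset of positive integers) `μ`,
`z_μ = ∏_d d^{m_d(μ)} · m_d(μ)!`. -/
def zPart (μ : Multiset ℕ) : ℚ :=
  ∏ d ∈ μ.toFinset, ((d : ℚ) ^ μ.count d * (μ.count d).factorial)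

/-- A finite set of multisets containing every multiset that can occur as one of the four
components of a decomposition `ρ₊ ∪ ρ₋ ∪ (2·τs) ∪ (τp ∪ τp) = π`. -/
def decompCarrier (π : Multiset ℕ) : Finset (Multiset ℕ) :=
  π.powerset.toFinset ∪ π.powerset.toFinset.image (Multiset.map (· / 2))

/-- `C_π^+`: the sum over all quadruples of partitions `(ρ₊, ρ₋, τs, τp)` with
`ρ₊ ∪ ρ₋ ∪ (2·τs) ∪ (τp ∪ τp) = π` and `|ρ₋|` even of
`(-1)^{ℓ(τs)} / (z_{ρ₊} z_{ρ₋} · 2^{ℓ(τs)} z_{τs} · 2^{ℓ(τp)} z_{τp})`. -/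
def Cplus (π : Multiset ℕ) : ℚ :=
  ∑ ρp ∈ decompCarrier π, ∑ ρm ∈ decompCarrier π,
    ∑ τs ∈ decompCarrier π, ∑ τp ∈ decompCarrier π,
      if ρp + ρm + Multiset.map (2 * ·) τs + (τp + τp) = π ∧ Even ρm.sum then
        (-1 : ℚ) ^ (Multiset.card τs) /
          (zPart ρp * zPart ρm * 2 ^ (Multiset.card τs) * zPart τs *
            2 ^ (Multiset.card τp) * zPart τp)
      else 0

/-- `C_π^-`: as `C_π^+` but with `|ρ₋|` odd. -/
def Cminus (π : Multiset ℕ) : ℚ :=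
  ∑ ρp ∈ decompCarrier π, ∑ ρm ∈ decompCarrier π,
    ∑ τs ∈ decompCarrier π, ∑ τp ∈ decompCarrier π,
      if ρp + ρm + Multiset.map (2 * ·) τs + (τp + τp) = π ∧ Odd ρm.sum then
        (-1 : ℚ) ^ (Multiset.card τs) /
          (zPart ρp * zPart ρm * 2 ^ (Multiset.card τs) * zPart τs *
            2 ^ (Multiset.card τp) * zPart τp)
      else 0

/-- `C_π := C_π^+ + C_π^-`. -/
def Cfun (π : Multiset ℕ) : ℚ := Cplus π + Cminus π

/-- `D_π := C_π^+ - C_π^-`. -/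
def Dfun (π : Multiset ℕ) : ℚ := Cplus π - Cminus π

/-!
Both `C_π` and `D_π` are sums over the quadruples decomposing `π` of a weight carrying the factor
`ε ^ |ρ₋|`, with `ε = 1` and `ε = -1` respectively. When `a` and `b` have no part in common, sorting
the parts of each component according to whether they contribute to `a` or to `b` identifies the
quadruples decomposing `a + b` with the pairs of a quadruple decomposing `a` and one decomposing
`b`, and the weight is multiplicative along this identification. So the sums are multiplicative, and
it remains to split `π` into its blocks of equal parts.
-/

/-- A function on multisets is disjoint-multiplicative when it turns the sum of two disjoint
multisets into the product of its values, and the empty multiset into `1`: the analogue for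
multisets of a multiplicative arithmetic function. -/
structure IsDisjointMultiplicative {α R : Type*} [MulOneClass R] (f : Multiset α → R) : Prop where
  map_zero : f 0 = 1
  map_add_of_disjoint : ∀ {a b : Multiset α}, Disjoint a b → f (a + b) = f a * f b

namespace IsDisjointMultiplicative

variable {α R : Type*} [CommMonoid R] {f : Multiset α → R}

lemma map_sum_replicate (hf : IsDisjointMultiplicative f) (n : α → ℕ) (s : Finset α) :
    f (∑ m ∈ s, Multiset.replicate (n m) m) = ∏ m ∈ s, f (Multiset.replicate (n m) m) := by
  classical
  induction s using Finset.induction_on with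
  | empty => simpa using hf.map_zero
  | insert m s hm ih =>
    have disjoint_rest :
        Disjoint (Multiset.replicate (n m) m) (∑ k ∈ s, Multiset.replicate (n k) k) := by
      rw [Multiset.disjoint_left]
      intro x hx hx'
      obtain ⟨k, hk, hxk⟩ := Multiset.mem_sum.1 hx'
      rw [Multiset.eq_of_mem_replicate hx] at hxk
      exact hm (Multiset.eq_of_mem_replicate hxk ▸ hk)
    rw [Finset.sum_insert hm, Finset.prod_insert hm, hf.map_add_of_disjoint disjoint_rest, ih]

lemma eq_prod_replicate_count [DecidableEq α] (hf : IsDisjointMultiplicative f) (s : Multiset α) :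
    f s = ∏ m ∈ s.toFinset, f (Multiset.replicate (s.count m) m) := by
  rw [← hf.map_sum_replicate]
  simp only [← Multiset.nsmul_singleton, Multiset.toFinset_sum_count_nsmul_eq]

end IsDisjointMultiplicative

lemma zPart_add {μ ν : Multiset ℕ} (h : Disjoint μ ν) : zPart (μ + ν) = zPart μ * zPart ν := by
  unfold zPart
  rw [Multiset.toFinset_add, Finset.prod_union (Multiset.disjoint_toFinset.2 h)]
  congr 1 <;> refine Finset.prod_congr rfl fun d hd => ?_
  · have hν : ν.count d = 0 := Multiset.count_eq_zero_of_notMem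
      (Multiset.disjoint_left.1 h (Multiset.mem_toFinset.1 hd))
    rw [Multiset.count_add, hν, add_zero]
  · have hμ : μ.count d = 0 := Multiset.count_eq_zero_of_notMem
      (Multiset.disjoint_right.1 h (Multiset.mem_toFinset.1 hd))
    rw [Multiset.count_add, hμ, zero_add]

/-- The quadruples `(ρ₊, ρ₋, τs, τp)` over which `C_π^±` are sums; as a product type it carries the
componentwise addition used to glue two quadruples. -/
abbrev PartitionQuadruple : Type :=
  Multiset ℕ × Multiset ℕ × Multiset ℕ × Multiset ℕ

namespace PartitionQuadruple

/-- The partition `ρ₊ ∪ ρ₋ ∪ (2·τs) ∪ (τp ∪ τp)` that a quadruple decomposes. -/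
def union : PartitionQuadruple → Multiset ℕ
  | (ρp, ρm, τs, τp) => ρp + ρm + Multiset.map (2 * ·) τs + (τp + τp)

/-- The summand `(-1)^{ℓ(τs)} / (z_{ρ₊} z_{ρ₋} · 2^{ℓ(τs)} z_{τs} · 2^{ℓ(τp)} z_{τp})` of
`C_π^±`. -/
def weight : PartitionQuadruple → ℚ
  | (ρp, ρm, τs, τp) =>
    (-1) ^ τs.card / (zPart ρp * zPart ρm * 2 ^ τs.card * zPart τs * 2 ^ τp.card * zPart τp)

/-- The weight twisted by `ε ^ |ρ₋|`: for `ε = -1` the twist is the sign with which the quadruple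
counts in `C_π^+ - C_π^-`, and for `ε = 1` it is trivial. -/
def twistedWeight (ε : ℚ) (q : PartitionQuadruple) : ℚ :=
  ε ^ q.2.1.sum * weight q

/-- The part of a quadruple that contributes the parts satisfying `p` to its union; since `τs`
contributes doubled parts, it is filtered by `p (2 * ·)`. -/
def restrict (p : ℕ → Prop) [DecidablePred p] : PartitionQuadruple → PartitionQuadruple
  | (ρp, ρm, τs, τp) => (ρp.filter p, ρm.filter p, τs.filter fun x => p (2 * x), τp.filter p)

/-- The finite set of all quadruples decomposing `π`, cut out of the same carrier as the sums
defining `C_π^±`. -/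
def decompositions (π : Multiset ℕ) : Finset PartitionQuadruple :=
  {q ∈ decompCarrier π ×ˢ decompCarrier π ×ˢ decompCarrier π ×ˢ decompCarrier π | union q = π}

/-- The common generalization of `C_π` (`ε = 1`) and `D_π` (`ε = -1`). -/
def twistedSum (ε : ℚ) (π : Multiset ℕ) : ℚ :=
  ∑ q ∈ decompositions π, twistedWeight ε q

lemma union_add (q r : PartitionQuadruple) : union (q + r) = union q + union r := by
  simp only [union, Multiset.map_add]
  abel

lemma disjoint_of_disjoint_union {q r : PartitionQuadruple} (h : Disjoint (union q) (union r)) :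
    Disjoint q.1 r.1 ∧ Disjoint q.2.1 r.2.1 ∧ Disjoint q.2.2.1 r.2.2.1 ∧
      Disjoint q.2.2.2 r.2.2.2 := by
  have disjoint_of_image_subset {s t : Multiset ℕ} (g : ℕ → ℕ) (hs : ∀ x ∈ s, g x ∈ union q)
      (ht : ∀ x ∈ t, g x ∈ union r) : Disjoint s t :=
    Multiset.disjoint_left.2 fun {x} hx hx' => Multiset.disjoint_left.1 h (hs x hx) (ht x hx')
  refine ⟨disjoint_of_image_subset id ?_ ?_, disjoint_of_image_subset id ?_ ?_,
    disjoint_of_image_subset (2 * ·) ?_ ?_, disjoint_of_image_subset id ?_ ?_⟩ <;>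
  simp +contextual [union]

section Restrict

variable {p : ℕ → Prop} [DecidablePred p]

lemma union_restrict (q : PartitionQuadruple) : union (restrict p q) = (union q).filter p := by
  simp only [union, restrict, Multiset.filter_add, Multiset.filter_map, Function.comp_def]

lemma restrict_add (q r : PartitionQuadruple) :
    restrict p (q + r) = restrict p q + restrict p r := by
  simp only [restrict, Multiset.filter_add, Prod.mk_add_mk]

lemma restrict_add_restrict_not (q : PartitionQuadruple) :
    restrict p q + restrict (fun x => ¬ p x) q = q := by
  simp only [restrict, Prod.mk_add_mk, Multiset.filter_add_not]

lemma restrict_eq_self {q : PartitionQuadruple} (h : ∀ x ∈ union q, p x) : restrict p q = q := by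
  obtain ⟨ρp, ρm, τs, τp⟩ := q
  simp only [restrict, Prod.mk.injEq, Multiset.filter_eq_self]
  refine ⟨?_, ?_, ?_, ?_⟩ <;> intro x hx <;> exact h _ (by simp [union, hx])

lemma restrict_eq_zero {q : PartitionQuadruple} (h : ∀ x ∈ union q, ¬ p x) :
    restrict p q = 0 := by
  simpa only [restrict_eq_self h, add_eq_right] using restrict_add_restrict_not (p := p) q

end Restrict

lemma mem_decompCarrier_of_le {π μ : Multiset ℕ} (h : μ ≤ π) : μ ∈ decompCarrier π := by
  simp [decompCarrier, h]

lemma mem_decompCarrier_of_map_two_mul_le {π μ : Multiset ℕ} (h : μ.map (2 * ·) ≤ π) :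
    μ ∈ decompCarrier π := by
  simp only [decompCarrier, Finset.mem_union, Finset.mem_image, Multiset.mem_toFinset,
    Multiset.mem_powerset]
  exact .inr ⟨_, h, by simp⟩

lemma mem_decompositions {π : Multiset ℕ} {q : PartitionQuadruple} :
    q ∈ decompositions π ↔ union q = π := by
  obtain ⟨ρp, ρm, τs, τp⟩ := q
  simp only [decompositions, Finset.mem_filter, Finset.mem_product, and_iff_right_iff_imp]
  rintro rfl
  refine ⟨mem_decompCarrier_of_le ?_, mem_decompCarrier_of_le ?_,
    mem_decompCarrier_of_map_two_mul_le ?_, mem_decompCarrier_of_le ?_⟩ <;>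
  · rw [Multiset.le_iff_count]
    intro x
    simp only [union, Multiset.count_add]
    omega

lemma decompositions_zero : decompositions 0 = {0} := by
  ext ⟨ρp, ρm, τs, τp⟩
  simp [mem_decompositions, union, and_assoc]

lemma sum_decompositions_add {M : Type*} [AddCommMonoid M] {a b : Multiset ℕ} (h : Disjoint a b)
    (f : PartitionQuadruple → M) :
    ∑ q ∈ decompositions (a + b), f q =
      ∑ x ∈ decompositions a ×ˢ decompositions b, f (x.1 + x.2) := by
  have hb : ∀ x ∈ b, x ∉ a := fun _ hx => Multiset.disjoint_right.1 h hx
  have filter_mem : (a + b).filter (· ∈ a) = a := by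
    rw [Multiset.filter_add, Multiset.filter_eq_self.2 fun _ => id,
      Multiset.filter_eq_nil.2 hb, add_zero]
  have filter_notMem : (a + b).filter (· ∉ a) = b := by
    rw [Multiset.filter_add, Multiset.filter_eq_nil.2 fun _ hx => not_not_intro hx,
      Multiset.filter_eq_self.2 hb, zero_add]
  refine Finset.sum_nbij' (fun q => (restrict (· ∈ a) q, restrict (· ∉ a) q))
    (fun x => x.1 + x.2) ?_ ?_ ?_ ?_ ?_
  · intro q hq
    rw [mem_decompositions] at hq
    simp only [Finset.mem_product, mem_decompositions, union_restrict, hq]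
    exact ⟨filter_mem, filter_notMem⟩
  · rintro ⟨q, r⟩ hqr
    simp only [Finset.mem_product, mem_decompositions] at hqr ⊢
    rw [union_add, hqr.1, hqr.2]
  · exact fun q _ => restrict_add_restrict_not q
  · rintro ⟨q, r⟩ hqr
    simp only [Finset.mem_product, mem_decompositions] at hqr
    obtain ⟨rfl, rfl⟩ := hqr
    simp only [restrict_add, restrict_eq_self fun _ => id, restrict_eq_self hb,
      restrict_eq_zero hb, restrict_eq_zero fun _ hx => not_not_intro hx, add_zero, zero_add]
  · exact fun q _ => congrArg f (restrict_add_restrict_not q).symm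

lemma weight_add {q r : PartitionQuadruple} (h : Disjoint (union q) (union r)) :
    weight (q + r) = weight q * weight r := by
  obtain ⟨hρp, hρm, hτs, hτp⟩ := disjoint_of_disjoint_union h
  simp only [weight, zPart_add hρp, zPart_add hρm, zPart_add hτs, zPart_add hτp,
    Multiset.card_add, pow_add, div_eq_mul_inv, mul_inv]
  ring

lemma twistedWeight_add (ε : ℚ) {q r : PartitionQuadruple} (h : Disjoint (union q) (union r)) :
    twistedWeight ε (q + r) = twistedWeight ε q * twistedWeight ε r := by
  simp only [twistedWeight, weight_add h, Prod.fst_add, Prod.snd_add, Multiset.sum_add, pow_add]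
  ring

lemma isDisjointMultiplicative_twistedSum (ε : ℚ) : IsDisjointMultiplicative (twistedSum ε) where
  map_zero := by simp [twistedSum, decompositions_zero, twistedWeight, weight, zPart]
  map_add_of_disjoint {a b} h := by
    simp only [twistedSum]
    rw [sum_decompositions_add h, Finset.sum_mul_sum, ← Finset.sum_product']
    refine Finset.sum_congr rfl fun x hx => twistedWeight_add ε ?_
    obtain ⟨hq, hr⟩ := Finset.mem_product.1 hx
    rwa [mem_decompositions.1 hq, mem_decompositions.1 hr]

lemma Cplus_eq_sum_decompositions (π : Multiset ℕ) :
    Cplus π = ∑ q ∈ decompositions π with Even q.2.1.sum, weight q := by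
  simp only [decompositions, Finset.filter_filter, Finset.sum_filter, Finset.sum_product]
  rfl

lemma Cminus_eq_sum_decompositions (π : Multiset ℕ) :
    Cminus π = ∑ q ∈ decompositions π with Odd q.2.1.sum, weight q := by
  simp only [decompositions, Finset.filter_filter, Finset.sum_filter, Finset.sum_product]
  rfl

lemma Cplus_add_mul_Cminus {ε : ℚ} (hε : ε ^ 2 = 1) (π : Multiset ℕ) :
    Cplus π + ε * Cminus π = twistedSum ε π := by
  rw [Cplus_eq_sum_decompositions, Cminus_eq_sum_decompositions, twistedSum, Finset.mul_sum,
    ← Finset.sum_filter_add_sum_filter_not (decompositions π) fun q => Even q.2.1.sum]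
  simp only [Nat.not_even_iff_odd]
  congr 1 <;> refine Finset.sum_congr rfl fun q hq => ?_
  · obtain ⟨k, hk⟩ := even_iff_exists_two_mul.1 (Finset.mem_filter.1 hq).2
    rw [twistedWeight, hk, pow_mul, hε, one_pow, one_mul]
  · obtain ⟨k, hk⟩ := (Finset.mem_filter.1 hq).2
    rw [twistedWeight, hk, pow_succ, pow_mul, hε, one_pow, one_mul]

lemma Cfun_eq_twistedSum : Cfun = twistedSum 1 := by
  funext π
  rw [Cfun, ← Cplus_add_mul_Cminus (one_pow 2), one_mul]

lemma Dfun_eq_twistedSum : Dfun = twistedSum (-1) := by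
  funext π
  rw [Dfun, ← Cplus_add_mul_Cminus neg_one_sq, neg_one_mul, sub_eq_add_neg]

end PartitionQuadruple

open PartitionQuadruple in
lemma isDisjointMultiplicative_Cfun : IsDisjointMultiplicative Cfun :=
  Cfun_eq_twistedSum ▸ isDisjointMultiplicative_twistedSum 1

open PartitionQuadruple in
lemma isDisjointMultiplicative_Dfun : IsDisjointMultiplicative Dfun :=
  Dfun_eq_twistedSum ▸ isDisjointMultiplicative_twistedSum (-1)

/-- `C_π` and `D_π` are multiplicative over the distinct parts of `π`. -/
theorem stmt11 (π : Multiset ℕ) (hπ : ∀ x ∈ π, 0 < x) :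
    Cfun π = ∏ m ∈ π.toFinset, Cfun (Multiset.replicate (π.count m) m) ∧
    Dfun π = ∏ m ∈ π.toFinset, Dfun (Multiset.replicate (π.count m) m) :=
  ⟨isDisjointMultiplicative_Cfun.eq_prod_replicate_count π,
    isDisjointMultiplicative_Dfun.eq_prod_replicate_count π⟩
end

section
/- For every partition π, the rational numbers C_π and D_π are non-negative: C_π ≥ 0 and D_π ≥ 0. -/
/-!
Fix `ε = ±1`, so that `C_π` and `D_π` are `C_π^+ + ε C_π^-`. This number is the coefficient of `x^π`
in a product of four generating series, one for each component of the quadruple. Those of `ρ₊`, `ρ₋`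
and `τs` are exponentials `exp (∑ w_d x_d)` with weights `1 / d`, `ε ^ d / d` and, on even `d` only,
`-1 / d`; hence so is their product, with the weights added. The total weight is `1 / d` for even
`d` and `(1 + ε) / d` for odd `d`, which is non-negative, and the series of `τp` has non-negative
coefficients. All series are truncated to finite sums, which does not affect the coefficients of
`x^μ` with `μ ≤ π`.
-/

open scoped AddMonoidAlgebra
open Finset

section ExpCoeff

variable {α 𝕜 : Type*} [DecidableEq α]

section Field

variable [Field 𝕜]

/-- The coefficient `∏_d w_d ^ m_d(μ) / m_d(μ)!` of the monomial `x^μ = ∏_d x_d ^ m_d(μ)` in the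
power series `exp (∑_d w_d x_d)`. -/
def expCoeff (w : α → 𝕜) (μ : Multiset α) : 𝕜 :=
  ∏ d ∈ μ.toFinset, w d ^ μ.count d / (μ.count d).factorial

lemma expCoeff_eq_prod_of_subset (w : α → 𝕜) {μ : Multiset α} {S : Finset α}
    (hS : μ.toFinset ⊆ S) :
    expCoeff w μ = ∏ d ∈ S, w d ^ μ.count d / (μ.count d).factorial := by
  refine prod_subset hS fun d _ hd ↦ ?_
  simp [Multiset.count_eq_zero_of_notMem (mt Multiset.mem_toFinset.2 hd)]

@[simp]
lemma expCoeff_zero (w : α → 𝕜) : expCoeff w 0 = 1 := by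
  simp [expCoeff]

lemma count_mul_expCoeff_cons [CharZero 𝕜] (w : α → 𝕜) (d : α) (μ : Multiset α) :
    (Multiset.count d (d ::ₘ μ) : 𝕜) * expCoeff w (d ::ₘ μ) = w d * expCoeff w μ := by
  have hd : d ∈ (d ::ₘ μ).toFinset := by simp
  rw [expCoeff_eq_prod_of_subset w (Multiset.toFinset_subset.2 (Multiset.subset_cons μ d)),
    expCoeff, ← mul_prod_erase _ _ hd, ← mul_prod_erase _ _ hd, ← mul_assoc, ← mul_assoc,
    Multiset.count_cons_self]
  congr 1
  · have hcount : (μ.count d : 𝕜) + 1 ≠ 0 := Nat.cast_add_one_ne_zero _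
    rw [Nat.factorial_succ, pow_succ']
    push_cast
    field_simp
  · refine prod_congr rfl fun e he ↦ ?_
    rw [Multiset.count_cons_of_ne (ne_of_mem_erase he)]

lemma expCoeff_mul (c w : α → 𝕜) (μ : Multiset α) :
    expCoeff (fun d ↦ c d * w d) μ = (μ.map c).prod * expCoeff w μ := by
  simp only [expCoeff, mul_pow, mul_div_assoc, prod_mul_distrib, prod_multiset_map_count]

lemma expCoeff_map {β : Type*} [DecidableEq β] {f : α → β} (hf : Function.Injective f)
    (w : β → 𝕜) (μ : Multiset α) : expCoeff w (μ.map f) = expCoeff (w ∘ f) μ := by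
  simp only [expCoeff, Multiset.toFinset_map, prod_image hf.injOn,
    Multiset.count_map_eq_count' f μ hf, Function.comp_apply]

lemma expCoeff_eq_zero {w : α → 𝕜} {μ : Multiset α} {d : α} (hd : d ∈ μ) (hw : w d = 0) :
    expCoeff w μ = 0 :=
  prod_eq_zero (Multiset.mem_toFinset.2 hd) <| by
    rw [hw, zero_pow (Multiset.count_ne_zero.2 hd), zero_div]

end Field

lemma expCoeff_nonneg [Field 𝕜] [LinearOrder 𝕜] [IsStrictOrderedRing 𝕜] {w : α → 𝕜}
    (hw : ∀ d, 0 ≤ w d) (μ : Multiset α) : 0 ≤ expCoeff w μ :=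
  prod_nonneg fun d _ ↦ div_nonneg (pow_nonneg (hw d) _) (Nat.cast_nonneg _)

lemma sum_toFinset_antidiagonal_cons {M : Type*} [AddCommMonoid M] (d : α) (μ : Multiset α)
    {G : Multiset α × Multiset α → M} (hG : ∀ p, d ∉ p.1 → G p = 0) :
    ∑ p ∈ (d ::ₘ μ).antidiagonal.toFinset, G p =
      ∑ p ∈ μ.antidiagonal.toFinset, G (d ::ₘ p.1, p.2) := by
  symm
  refine sum_of_injOn (fun p ↦ (d ::ₘ p.1, p.2)) ?_ ?_ ?_ fun _ _ ↦ rfl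
  · rintro ⟨a, b⟩ _ ⟨a', b'⟩ _ h
    simpa using h
  · rintro ⟨a, b⟩ hab
    simp only [mem_coe, Multiset.mem_toFinset, Multiset.mem_antidiagonal] at hab ⊢
    rw [Multiset.cons_add, hab]
  · rintro ⟨a, b⟩ hab hnot
    refine hG _ fun hd ↦ hnot ?_
    obtain ⟨a, rfl⟩ := Multiset.exists_cons_of_mem hd
    simp only [Multiset.mem_toFinset, Multiset.mem_antidiagonal, Multiset.cons_add,
      Multiset.cons_inj_right] at hab
    exact ⟨(a, b), by simpa only [mem_coe, Multiset.mem_toFinset, Multiset.mem_antidiagonal], rfl⟩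

lemma sum_toFinset_antidiagonal_swap {M : Type*} [AddCommMonoid M] (μ : Multiset α)
    (G : Multiset α × Multiset α → M) :
    ∑ p ∈ μ.antidiagonal.toFinset, G p.swap = ∑ p ∈ μ.antidiagonal.toFinset, G p :=
  sum_equiv (Equiv.prodComm _ _) (by simp [add_comm]) fun _ _ ↦ rfl

variable [Field 𝕜] [CharZero 𝕜]

lemma mul_sum_antidiagonal_expCoeff (v w : α → 𝕜) (d : α) (μ : Multiset α) :
    v d * ∑ p ∈ μ.antidiagonal.toFinset, expCoeff v p.1 * expCoeff w p.2 =
      ∑ p ∈ (d ::ₘ μ).antidiagonal.toFinset,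
        (p.1.count d : 𝕜) * (expCoeff v p.1 * expCoeff w p.2) := by
  rw [sum_toFinset_antidiagonal_cons d μ fun p hp ↦ by
    simp [Multiset.count_eq_zero_of_notMem hp], mul_sum]
  simp only [← mul_assoc, count_mul_expCoeff_cons]

-- Both sides, multiplied by `m_d(μ)`, satisfy the same recursion when a part `d` is removed:
-- this is `∂/∂x_d` applied to a product of two exponentials.
theorem sum_antidiagonal_expCoeff_mul (v w : α → 𝕜) (μ : Multiset α) :
    ∑ p ∈ μ.antidiagonal.toFinset, expCoeff v p.1 * expCoeff w p.2 = expCoeff (v + w) μ := by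
  induction μ using Multiset.induction_on with
  | empty => simp
  | cons d μ ih =>
    have hcount : (Multiset.count d (d ::ₘ μ) : 𝕜) ≠ 0 := by simp [Nat.cast_add_one_ne_zero]
    have hright : w d * expCoeff (v + w) μ = ∑ p ∈ (d ::ₘ μ).antidiagonal.toFinset,
        (p.2.count d : 𝕜) * (expCoeff v p.1 * expCoeff w p.2) := by
      rw [← ih, ← sum_toFinset_antidiagonal_swap μ, ← sum_toFinset_antidiagonal_swap (d ::ₘ μ)]
      simpa only [Prod.fst_swap, Prod.snd_swap, mul_comm (expCoeff v _)] using
        mul_sum_antidiagonal_expCoeff w v d μ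
    refine mul_left_cancel₀ hcount ?_
    rw [count_mul_expCoeff_cons, Pi.add_apply, add_mul, hright, ← ih,
      mul_sum_antidiagonal_expCoeff, ← sum_add_distrib, mul_sum]
    refine sum_congr rfl fun p hp ↦ ?_
    rw [← Multiset.mem_antidiagonal.1 (Multiset.mem_toFinset.1 hp), Multiset.count_add]
    push_cast
    ring

end ExpCoeff

section GenPoly

variable {ι α R : Type*}

/-- The generating polynomial `∑_{i ∈ K} f i · x^{φ i}`, where the monomials `x^μ` in variables
indexed by `α` are encoded as multisets, so that it lives in the monoid algebra of `Multiset α`. -/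
noncomputable def genPoly [Semiring R] (K : Finset ι) (φ : ι → Multiset α) (f : ι → R) :
    R[Multiset α] :=
  ∑ i ∈ K, AddMonoidAlgebra.single (φ i) (f i)

lemma coeff_genPoly [Semiring R] [DecidableEq α] (K : Finset ι) (φ : ι → Multiset α) (f : ι → R)
    (μ : Multiset α) : (genPoly K φ f).coeff μ = ∑ i ∈ K, if φ i = μ then f i else 0 := by
  simp [genPoly, Finsupp.single_apply]

lemma coeff_genPoly_apply [Semiring R] {K : Finset ι} {φ : ι → Multiset α}
    (hφ : Function.Injective φ) (f : ι → R) {i : ι} (hi : i ∈ K) :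
    (genPoly K φ f).coeff (φ i) = f i := by
  classical
  rw [coeff_genPoly, sum_eq_single_of_mem i hi fun j _ hj ↦ if_neg (hφ.ne hj), if_pos rfl]

lemma coeff_genPoly_eq_zero [Semiring R] {K : Finset ι} {φ : ι → Multiset α} (f : ι → R)
    {μ : Multiset α} (hμ : ∀ i ∈ K, φ i ≠ μ) : (genPoly K φ f).coeff μ = 0 := by
  classical
  rw [coeff_genPoly, sum_eq_zero fun i hi ↦ if_neg (hμ i hi)]

lemma coeff_genPoly_nonneg [Semiring R] [PartialOrder R] [IsOrderedAddMonoid R] {K : Finset ι}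
    {φ : ι → Multiset α} {f : ι → R} (hf : ∀ i ∈ K, 0 ≤ f i) (μ : Multiset α) :
    0 ≤ (genPoly K φ f).coeff μ := by
  classical
  rw [coeff_genPoly]
  exact sum_nonneg fun i hi ↦ by split_ifs; exacts [hf i hi, le_rfl]

lemma coeff_mul_eq_sum_antidiagonal [Semiring R] [DecidableEq α] (F G : R[Multiset α])
    (μ : Multiset α) :
    (F * G).coeff μ = ∑ p ∈ μ.antidiagonal.toFinset, F.coeff p.1 * G.coeff p.2 :=
  AddMonoidAlgebra.coeff_mul_antidiag F G μ _ (by simp)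

lemma coeff_mul_eq_expCoeff [Field R] [CharZero R] [DecidableEq α] {F G : R[Multiset α]}
    {v w : α → R} {π : Multiset α} (hF : ∀ μ ≤ π, F.coeff μ = expCoeff v μ)
    (hG : ∀ μ ≤ π, G.coeff μ = expCoeff w μ) :
    ∀ μ ≤ π, (F * G).coeff μ = expCoeff (v + w) μ := by
  intro μ hμ
  rw [coeff_mul_eq_sum_antidiagonal, ← sum_antidiagonal_expCoeff_mul]
  refine sum_congr rfl fun p hp ↦ ?_
  obtain rfl := Multiset.mem_antidiagonal.1 (Multiset.mem_toFinset.1 hp)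
  rw [hF _ ((Multiset.le_add_right _ _).trans hμ), hG _ ((Multiset.le_add_left _ _).trans hμ)]

lemma coeff_mul_nonneg [Semiring R] [PartialOrder R] [IsOrderedRing R] {F G : R[Multiset α]}
    {π : Multiset α} (hF : ∀ μ ≤ π, 0 ≤ F.coeff μ) (hG : ∀ μ ≤ π, 0 ≤ G.coeff μ) :
    0 ≤ (F * G).coeff π := by
  classical
  rw [coeff_mul_eq_sum_antidiagonal]
  refine sum_nonneg fun p hp ↦ ?_
  obtain rfl := Multiset.mem_antidiagonal.1 (Multiset.mem_toFinset.1 hp)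
  exact mul_nonneg (hF _ (Multiset.le_add_right _ _)) (hG _ (Multiset.le_add_left _ _))

end GenPoly

section Partition

lemma inv_zPart (μ : Multiset ℕ) : (zPart μ)⁻¹ = expCoeff (fun d : ℕ ↦ (d : ℚ)⁻¹) μ := by
  simp only [zPart, expCoeff, ← prod_inv_distrib, mul_inv, inv_pow, div_eq_mul_inv]

lemma pow_sum_div_zPart (ε : ℚ) (μ : Multiset ℕ) :
    ε ^ μ.sum / zPart μ = expCoeff (fun d : ℕ ↦ ε ^ d * (d : ℚ)⁻¹) μ := by
  have hpow : (μ.map (ε ^ ·)).prod = ε ^ μ.sum := by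
    simp [prod_multiset_map_count, sum_multiset_count, ← prod_pow_eq_pow_sum, ← pow_mul, mul_comm]
  rw [expCoeff_mul, ← inv_zPart, hpow, div_eq_mul_inv]

/-- The weight of the exponential series `∑_τ (-1)^{ℓ(τ)} / (2^{ℓ(τ)} z_τ) · x^{2·τ}`: it is
`-1 / d` for even `d`, since the part `d / 2` of `τ` contributes `-1 / (2 · (d / 2))`. -/
def doubledWeight (d : ℕ) : ℚ := if Even d then -(d : ℚ)⁻¹ else 0

lemma map_two_mul_injective : Function.Injective (Multiset.map (2 * · : ℕ → ℕ)) :=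
  Multiset.map_injective (mul_right_injective₀ two_ne_zero)

lemma neg_one_pow_div_zPart (τ : Multiset ℕ) :
    (-1) ^ τ.card / (2 ^ τ.card * zPart τ) = expCoeff doubledWeight (τ.map (2 * ·)) := by
  have hweight : doubledWeight ∘ (2 * ·) = fun d : ℕ ↦ (-1 / 2 : ℚ) * (d : ℚ)⁻¹ := by
    ext d
    simp only [doubledWeight, Function.comp_apply, even_two_mul, if_true]
    push_cast
    ring
  rw [expCoeff_map (mul_right_injective₀ two_ne_zero), hweight, expCoeff_mul, ← inv_zPart,
    Multiset.map_const', Multiset.prod_replicate, div_pow, div_mul_eq_div_div, div_eq_mul_inv]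

lemma mem_decompCarrier_of_le {π μ : Multiset ℕ} (h : μ ≤ π) : μ ∈ decompCarrier π := by
  simp [decompCarrier, h]

lemma map_half_mem_decompCarrier {π μ : Multiset ℕ} (h : μ ≤ π) :
    μ.map (· / 2) ∈ decompCarrier π :=
  mem_union_right _ (mem_image_of_mem _ (by simpa using h))

lemma coeff_genPoly_decompCarrier {π μ : Multiset ℕ} (hμ : μ ≤ π) (f : Multiset ℕ → ℚ) :
    (genPoly (decompCarrier π) id f).coeff μ = f μ :=
  coeff_genPoly_apply Function.injective_id f (mem_decompCarrier_of_le hμ)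

lemma coeff_genPoly_map_two_mul {π μ : Multiset ℕ} (hμ : μ ≤ π) :
    (genPoly (decompCarrier π) (Multiset.map (2 * ·))
      fun τ ↦ (-1 : ℚ) ^ τ.card / (2 ^ τ.card * zPart τ)).coeff μ = expCoeff doubledWeight μ := by
  by_cases heven : ∀ d ∈ μ, Even d
  · have hdouble : (μ.map (· / 2)).map (2 * ·) = μ := by
      rw [Multiset.map_map]
      exact (Multiset.map_congr rfl fun d hd ↦ Nat.two_mul_div_two_of_even (heven d hd)).trans
        μ.map_id
    conv_lhs => rw [← hdouble]
    rw [coeff_genPoly_apply map_two_mul_injective _ (map_half_mem_decompCarrier hμ),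
      neg_one_pow_div_zPart, hdouble]
  · rw [coeff_genPoly_eq_zero]
    · push Not at heven
      obtain ⟨d, hd, hodd⟩ := heven
      exact (expCoeff_eq_zero hd (if_neg hodd)).symm
    · rintro τ - rfl
      exact heven (by simp)

lemma ite_even_add_mul_ite_odd {R : Type*} [Semiring R] {ε : R} (hε : ε ^ 2 = 1) (n : ℕ)
    (P : Prop) [Decidable P] (t : R) :
    (if P ∧ Even n then t else 0) + ε * (if P ∧ Odd n then t else 0) =
      if P then ε ^ n * t else 0 := by
  rcases Nat.even_or_odd' n with ⟨k, rfl | rfl⟩ <;>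
    simp [← Nat.not_even_iff_odd, pow_add, pow_mul, hε]

lemma Cplus_add_mul_Cminus_eq_coeff {ε : ℚ} (hε : ε ^ 2 = 1) (π : Multiset ℕ) :
    Cplus π + ε * Cminus π =
      (genPoly (decompCarrier π) id (fun ρ ↦ (zPart ρ)⁻¹) *
        genPoly (decompCarrier π) id (fun ρ ↦ ε ^ ρ.sum / zPart ρ) *
        genPoly (decompCarrier π) (Multiset.map (2 * ·))
          (fun τ ↦ (-1) ^ τ.card / (2 ^ τ.card * zPart τ)) *
        genPoly (decompCarrier π) (fun τ ↦ τ + τ)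
          (fun τ ↦ (2 ^ τ.card * zPart τ)⁻¹)).coeff π := by
  rw [mul_assoc, mul_assoc]
  simp only [genPoly, sum_mul]
  simp only [mul_sum, AddMonoidAlgebra.single_mul_single, AddMonoidAlgebra.coeff_sum,
    AddMonoidAlgebra.coeff_single, Finsupp.finsetSum_apply, Finsupp.single_apply, Cplus, Cminus,
    ← sum_add_distrib, id]
  refine sum_congr rfl fun ρp _ ↦ sum_congr rfl fun ρm _ ↦ sum_congr rfl fun τs _ ↦
    sum_congr rfl fun τp _ ↦ ?_
  rw [ite_even_add_mul_ite_odd hε]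
  simp only [add_assoc]
  refine if_congr Iff.rfl ?_ rfl
  simp only [div_eq_mul_inv, mul_inv]
  ring

lemma totalWeight_nonneg {ε : ℚ} (hε : ε ^ 2 = 1) (d : ℕ) :
    0 ≤ (d : ℚ)⁻¹ + ε ^ d * (d : ℚ)⁻¹ + doubledWeight d := by
  have hd : (0 : ℚ) ≤ (d : ℚ)⁻¹ := by positivity
  rcases Nat.even_or_odd' d with ⟨k, rfl | rfl⟩
  · rw [doubledWeight, if_pos (even_two_mul k), pow_mul, hε, one_pow]
    linarith
  · have hneg : -1 ≤ ε := (abs_le_of_sq_le_sq' (by rw [hε, one_pow]) zero_le_one).1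
    rw [doubledWeight, if_neg (by simp), pow_succ, pow_mul, hε, one_pow]
    nlinarith

theorem Cplus_add_mul_Cminus_nonneg {ε : ℚ} (hε : ε ^ 2 = 1) (π : Multiset ℕ) :
    0 ≤ Cplus π + ε * Cminus π := by
  rw [Cplus_add_mul_Cminus_eq_coeff hε]
  refine coeff_mul_nonneg (fun μ hμ ↦ ?_) fun μ _ ↦ coeff_genPoly_nonneg (fun τ _ ↦ ?_) μ
  · have hplus : ∀ μ ≤ π, (genPoly (decompCarrier π) id fun ρ ↦ (zPart ρ)⁻¹).coeff μ =
        expCoeff (fun d : ℕ ↦ (d : ℚ)⁻¹) μ :=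
      fun μ hμ ↦ (coeff_genPoly_decompCarrier hμ _).trans (inv_zPart μ)
    have hminus : ∀ μ ≤ π, (genPoly (decompCarrier π) id fun ρ ↦ ε ^ ρ.sum / zPart ρ).coeff μ =
        expCoeff (fun d : ℕ ↦ ε ^ d * (d : ℚ)⁻¹) μ :=
      fun μ hμ ↦ (coeff_genPoly_decompCarrier hμ _).trans (pow_sum_div_zPart ε μ)
    rw [coeff_mul_eq_expCoeff (coeff_mul_eq_expCoeff hplus hminus)
      (fun _ ↦ coeff_genPoly_map_two_mul) μ hμ]
    exact expCoeff_nonneg (totalWeight_nonneg hε) μ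
  · have hz : 0 ≤ (zPart τ)⁻¹ := by
      rw [inv_zPart]
      exact expCoeff_nonneg (fun d ↦ by positivity) τ
    rw [mul_inv]
    positivity

end Partition

/-- The rational numbers `C_π` and `D_π` are non-negative for every partition `π`. -/
theorem stmt12 (π : Multiset ℕ) (hπ : ∀ x ∈ π, 0 < x) :
    0 ≤ Cfun π ∧ 0 ≤ Dfun π := by
  constructor
  · simpa [Cfun] using Cplus_add_mul_Cminus_nonneg (one_pow 2) π
  · simpa [Dfun, sub_eq_add_neg] using Cplus_add_mul_Cminus_nonneg neg_one_sq π
end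

section
/- For every n ≥ 0, ∑_{λ ⊢ n} ∏_{d} (m_d(λ) + 1) = ∑_{j=0}^{n} p(j)·p(n−j), where the sum on the left is over all partitions λ of n, the product is over the distinct parts d of λ, and m_d(λ) is the multiplicity of d in λ. -/
/-!
The product `∏_d (m_d(λ) + 1)` counts the sub-multisets `s` of the multiset of parts of `λ`: for
each part `d` one chooses how many of its `m_d(λ)` copies go into `s`. Splitting `λ` into `s` and
its complement is a bijection from the pairs `(λ, s)` onto the pairs of partitions whose sizes add
up to `n`.
-/

open Finset.HasAntidiagonal (antidiagonal mem_antidiagonal)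

section Splitting

variable {n : ℕ}

theorem zero_notMem_parts (P : n.Partition) : 0 ∉ P.parts :=
  fun h => (P.parts_pos h).false

theorem parts_ofSums_of_zero_notMem {s : Multiset ℕ} (hs : s.sum = n) (h0 : 0 ∉ s) :
    (Nat.Partition.ofSums n s hs).parts = s :=
  Multiset.filter_eq_self.2 fun _ hd => ne_of_mem_of_not_mem hd h0

theorem parts_ofMultiset_of_le {P : n.Partition} {s : Multiset ℕ} (hs : s ≤ P.parts) :
    (Nat.Partition.ofMultiset s).parts = s :=
  parts_ofSums_of_zero_notMem rfl fun h => zero_notMem_parts P (Multiset.mem_of_le hs h)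

theorem parts_ofSums_parts_add {j k : ℕ} (A : j.Partition) (B : k.Partition)
    (h : (A.parts + B.parts).sum = n) :
    (Nat.Partition.ofSums n (A.parts + B.parts) h).parts = A.parts + B.parts :=
  parts_ofSums_of_zero_notMem h fun h0 => (Multiset.mem_add.1 h0).elim
    (zero_notMem_parts A) (zero_notMem_parts B)

/-- Pairs of partitions of total size `n`, the objects counted by `∑_j p(j)·p(n-j)`. Indexing by the
antidiagonal rather than by `j` alone keeps the truncated subtraction `n - j` out of the types. -/
abbrev PartitionPair (n : ℕ) : Type :=
  Σ jk : antidiagonal n, jk.1.1.Partition × jk.1.2.Partition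

theorem PartitionPair.ext_parts {x y : PartitionPair n} (hfst : x.2.1.parts = y.2.1.parts)
    (hsnd : x.2.2.parts = y.2.2.parts) : x = y := by
  obtain ⟨⟨⟨j, k⟩, _⟩, A, B⟩ := x
  obtain ⟨⟨⟨j', k'⟩, _⟩, A', B'⟩ := y
  obtain rfl : j = j' :=
    A.parts_sum.symm.trans ((congrArg Multiset.sum hfst).trans A'.parts_sum)
  obtain rfl : k = k' :=
    B.parts_sum.symm.trans ((congrArg Multiset.sum hsnd).trans B'.parts_sum)
  obtain rfl : A = A' := Nat.Partition.ext hfst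
  obtain rfl : B = B' := Nat.Partition.ext hsnd
  rfl

theorem PartitionPair.sum_parts_add (x : PartitionPair n) :
    (x.2.1.parts + x.2.2.parts).sum = n := by
  rw [Multiset.sum_add, x.2.1.parts_sum, x.2.2.parts_sum, mem_antidiagonal.1 x.1.2]

theorem sum_add_sum_sub_of_le_parts {P : n.Partition} {s : Multiset ℕ} (hs : s ≤ P.parts) :
    s.sum + (P.parts - s).sum = n := by
  rw [← Multiset.sum_add, add_tsub_cancel_of_le hs, P.parts_sum]

/-- The splitting bijection: a partition `P` of `n` with a sub-multiset `s` of its parts corresponds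
to the pair of partitions with parts `s` and `P.parts - s`. The constructors `ofMultiset` and
`ofSums` discard zeros, of which there are none here. -/
def splitPartsEquiv (n : ℕ) : (Σ P : n.Partition, Finset.Iic P.parts) ≃ PartitionPair n where
  toFun x :=
    ⟨⟨(x.2.1.sum, (x.1.parts - x.2.1).sum),
        mem_antidiagonal.2 (sum_add_sum_sub_of_le_parts (Finset.mem_Iic.1 x.2.2))⟩,
      .ofMultiset x.2.1, .ofMultiset (x.1.parts - x.2.1)⟩
  invFun y :=
    ⟨.ofSums n (y.2.1.parts + y.2.2.parts) y.sum_parts_add, y.2.1.parts, by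
      rw [Finset.mem_Iic, parts_ofSums_parts_add]
      exact Multiset.le_add_right _ _⟩
  left_inv := by
    rintro ⟨P, s, hs⟩
    have hle : s ≤ P.parts := Finset.mem_Iic.1 hs
    have hfst := parts_ofMultiset_of_le hle
    have hsnd : (Nat.Partition.ofMultiset (P.parts - s)).parts = P.parts - s :=
      parts_ofMultiset_of_le tsub_le_self
    refine Sigma.subtype_ext (Nat.Partition.ext ?_) hfst
    rw [parts_ofSums_parts_add, hfst, hsnd, add_tsub_cancel_of_le hle]
  right_inv := by
    intro y
    have hsub : (Nat.Partition.ofSums n (y.2.1.parts + y.2.2.parts) y.sum_parts_add).parts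
        - y.2.1.parts = y.2.2.parts := by
      rw [parts_ofSums_parts_add, add_tsub_cancel_left]
    exact PartitionPair.ext_parts (parts_ofMultiset_of_le le_rfl)
      ((parts_ofMultiset_of_le tsub_le_self).trans hsub)

theorem card_partitionPair (n : ℕ) :
    Fintype.card (PartitionPair n) = ∑ jk ∈ antidiagonal n,
      Fintype.card (Nat.Partition jk.1) * Fintype.card (Nat.Partition jk.2) := by
  simp only [Fintype.card_sigma, Fintype.card_prod]
  exact Finset.sum_coe_sort (antidiagonal n) fun jk =>
    Fintype.card (Nat.Partition jk.1) * Fintype.card (Nat.Partition jk.2)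

end Splitting

/-- `∑_{λ ⊢ n} ∏_d (m_d(λ) + 1) = ∑_{j=0}^{n} p(j)·p(n-j)`. -/
theorem stmt14 (n : ℕ) :
    ∑ P : Nat.Partition n, ∏ d ∈ P.parts.toFinset, (P.parts.count d + 1) =
      ∑ j ∈ Finset.range (n + 1),
        Fintype.card (Nat.Partition j) * Fintype.card (Nat.Partition (n - j)) := by
  calc ∑ P : Nat.Partition n, ∏ d ∈ P.parts.toFinset, (P.parts.count d + 1)
      = ∑ P : Nat.Partition n, (Finset.Iic P.parts).card := by
        simp only [Multiset.card_Iic]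
    _ = Fintype.card (Σ P : Nat.Partition n, Finset.Iic P.parts) := by
        simp only [Fintype.card_sigma, Fintype.card_coe]
    _ = Fintype.card (PartitionPair n) := Fintype.card_congr (splitPartsEquiv n)
    _ = ∑ jk ∈ antidiagonal n,
          Fintype.card (Nat.Partition jk.1) * Fintype.card (Nat.Partition jk.2) :=
        card_partitionPair n
    _ = ∑ j ∈ Finset.range (n + 1),
          Fintype.card (Nat.Partition j) * Fintype.card (Nat.Partition (n - j)) :=
        Finset.Nat.sum_antidiagonal_eq_sum_range_succ_mk _ n
end
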